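/- arXiv:1012.4728 — 5 statements merged into one kernel-verified Lean document; each statement's English description precedes it below -/
import Mathlib

section
/- There exists a universal constant K > 0 such that the following holds for all positive integers k, n and all ε. Let ρ_1, …, ρ_k be n×n positive semidefinite complex matrices, let ρ := ∑_{i=1}^k ρ_i, and let P_1, …, P_k be n×n orthogonal projections such that ∑_{i≠j} Tr(P_i P_j P_i ρ_i) ≤ ε and ∑_{i≠j} Tr(P_i ρ_j) ≤ ε, where 0 < ε ≤ Tr(ρ). Then there exist n×n orthogonal projections Q_1, …, Q_k with Q_i Q_j = 0 for all i ≠ j, such that ∑_{i=1}^k Tr((P_i − Q_i)² ρ_i) ≤ K · ε^{1/2} · Tr(ρ)^{1/2}. -/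
open Matrix Finset
open scoped ComplexOrder

theorem svd_aux {F E : Type*} [NormedAddCommGroup F] [InnerProductSpace ℂ F] [FiniteDimensional ℂ F]
    [NormedAddCommGroup E] [InnerProductSpace ℂ E] [FiniteDimensional ℂ E] {n : ℕ}
    (hF : Module.finrank ℂ F = n) (hE : Module.finrank ℂ E = n) (L : F →ₗ[ℂ] E) :
    ∃ (e : OrthonormalBasis (Fin n) ℂ F) (f : OrthonormalBasis (Fin n) ℂ E) (s : Fin n → ℝ),
      (∀ j, 0 ≤ s j) ∧ ∀ j, L (e j) = (s j : ℂ) • f j := by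
  obtain ⟨T, hTL⟩ : ∃ T : F →ₗ[ℂ] F, ∀ x, T x = L.adjoint (L x) := ⟨L.adjoint ∘ₗ L, fun x => rfl⟩
  have hT : T.IsSymmetric := by
    intro x y
    rw [hTL, hTL, LinearMap.adjoint_inner_left, LinearMap.adjoint_inner_right]
  set e := hT.eigenvectorBasis hF with he
  set g := hT.eigenvalues hF with hg
  have hTe : ∀ j, L.adjoint (L (e j)) = (g j : ℂ) • e j := fun j => by
    rw [← hTL]; exact hT.apply_eigenvectorBasis hF j
  have hin : ∀ i j, inner ℂ (L (e i)) (L (e j)) = if i = j then (g j : ℂ) else 0 := by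
    intro i j
    rw [← LinearMap.adjoint_inner_right, hTe, inner_smul_right, e.inner_eq_ite]
    simp
  have hnorm : ∀ j, ‖L (e j)‖ ^ 2 = g j := by
    intro j
    rw [← inner_self_eq_norm_sq (𝕜 := ℂ), hin]
    simp
  have hg0 : ∀ j, 0 ≤ g j := fun j => by rw [← hnorm]; positivity
  let f0 : Fin n → E := fun j => ((Real.sqrt (g j) : ℂ))⁻¹ • L (e j)
  let s : Set (Fin n) := {j | g j ≠ 0}
  have hf0 : Orthonormal ℂ (s.domRestrict f0) := by
    rw [orthonormal_iff_ite]
    rintro ⟨i, hi⟩ ⟨j, hj⟩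
    have hj' : 0 < g j := lt_of_le_of_ne (hg0 j) (Ne.symm hj)
    simp only [Set.domRestrict_apply, f0, inner_smul_left, inner_smul_right, hin, Subtype.mk.injEq]
    split_ifs with h
    · subst h
      have h2 : (Real.sqrt (g i) : ℂ) ≠ 0 := by
        exact_mod_cast (Real.sqrt_pos.2 hj').ne'
      have h3 : (g i : ℂ) = Real.sqrt (g i) * Real.sqrt (g i) := by
        exact_mod_cast (Real.mul_self_sqrt hj'.le).symm
      simp only [map_inv₀, Complex.conj_ofReal]
      rw [h3]; field_simp
    · simp
  obtain ⟨f, hf⟩ := hf0.exists_orthonormalBasis_extension_of_card_eq (by simp [hE])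
  refine ⟨e, f, fun j => Real.sqrt (g j), fun j => Real.sqrt_nonneg _, fun j => ?_⟩
  by_cases hj : g j = 0
  · have : L (e j) = 0 := by
      have := hnorm j
      rw [hj] at this
      simpa using this
    simp [this, hj]
  · rw [hf j hj]
    have hj' : 0 < g j := lt_of_le_of_ne (hg0 j) (Ne.symm hj)
    have h2 : (Real.sqrt (g j) : ℂ) ≠ 0 := by
      exact_mod_cast (Real.sqrt_pos.2 hj').ne'
    simp only [f0]
    rw [smul_smul, mul_inv_cancel₀ h2, one_smul]

theorem polar_aux {J E : Type*} [Fintype J] [DecidableEq J]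
    [NormedAddCommGroup E] [InnerProductSpace ℂ E] [FiniteDimensional ℂ E]
    (hE : Module.finrank ℂ E = Fintype.card J) (m : J → E) :
    ∃ w : OrthonormalBasis J ℂ E, ∀ α,
      (3 * ‖m α‖ ^ 2 - ∑ β, ‖inner ℂ (m β) (m α)‖ ^ 2) / 2 ≤ (inner ℂ (w α) (m α)).re := by
  let b := EuclideanSpace.basisFun J ℂ
  let L : EuclideanSpace ℂ J →ₗ[ℂ] E := b.toBasis.constr ℂ m
  have hL : ∀ α, L (b α) = m α := fun α => by
    have := b.toBasis.constr_basis ℂ m α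
    rwa [b.coe_toBasis] at this
  obtain ⟨e, f, s, hs, hLe⟩ := svd_aux (F := EuclideanSpace ℂ J) (by simp) hE L
  have hLf : ∀ j, L.adjoint (f j) = (s j : ℂ) • e j := by
    intro j
    refine InnerProductSpace.ext_inner_left_basis e.toBasis fun i => ?_
    rw [e.coe_toBasis, LinearMap.adjoint_inner_right, hLe, inner_smul_left, inner_smul_right,
      f.inner_eq_ite, e.inner_eq_ite]
    by_cases h : i = j <;> simp [h]
  have hfL : ∀ j x, inner ℂ (f j) (L x) = (s j : ℂ) * inner ℂ (e j) x := by
    intro j x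
    rw [← LinearMap.adjoint_inner_left, hLf, inner_smul_left, Complex.conj_ofReal]
  let Φ := e.equiv f (Equiv.refl _)
  have hΦ : ∀ j, Φ (e j) = f j := fun j => by simp [Φ]
  refine ⟨b.map Φ, fun α => ?_⟩
  have h1 : ‖m α‖ ^ 2 = ∑ j, s j ^ 2 * ‖inner ℂ (e j) (b α)‖ ^ 2 := by
    rw [← hL, ← f.sum_sq_norm_inner_right]
    refine Finset.sum_congr rfl fun j _ => ?_
    rw [hfL, norm_mul, mul_pow, Complex.norm_real, Real.norm_eq_abs, sq_abs]
  have h2 : ∑ β, ‖inner ℂ (m β) (m α)‖ ^ 2 = ∑ j, s j ^ 4 * ‖inner ℂ (e j) (b α)‖ ^ 2 := by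
    have : ∀ β, inner ℂ (m β) (m α) = inner ℂ (b β) (L.adjoint (L (b α))) := fun β => by
      rw [LinearMap.adjoint_inner_right, hL, hL]
    simp_rw [this]
    rw [b.sum_sq_norm_inner_right, ← e.sum_sq_norm_inner_right]
    refine Finset.sum_congr rfl fun j _ => ?_
    rw [LinearMap.adjoint_inner_right, hLe, inner_smul_left, hfL, norm_mul, norm_mul, mul_pow, mul_pow,
      Complex.conj_ofReal, Complex.norm_real, Real.norm_eq_abs, sq_abs]
    ring
  have h3 : (inner ℂ ((b.map Φ) α) (m α)).re = ∑ j, s j * ‖inner ℂ (e j) (b α)‖ ^ 2 := by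
    have : inner ℂ ((b.map Φ) α) (m α) = ((∑ j, s j * ‖inner ℂ (e j) (b α)‖ ^ 2 : ℝ) : ℂ) := by
      rw [← hL, ← f.sum_inner_mul_inner, OrthonormalBasis.map_apply]
      push_cast
      refine Finset.sum_congr rfl fun j _ => ?_
      rw [hfL, ← hΦ, LinearIsometryEquiv.inner_map_map, ← inner_conj_symm (b α) (e j),
        ← Complex.conj_mul']
      ring
    rw [this, Complex.ofReal_re]
  rw [h1, h2, h3, Finset.mul_sum, ← Finset.sum_sub_distrib, Finset.sum_div]
  refine Finset.sum_le_sum fun j _ => ?_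
  have hq := sq_nonneg ‖inner ℂ (e j) (b α)‖
  have : (3 * s j ^ 2 - s j ^ 4) / 2 ≤ s j := by
    have := hs j
    nlinarith [mul_nonneg this (mul_nonneg (sq_nonneg (s j - 1)) (by linarith : 0 ≤ s j + 2))]
  nlinarith [mul_le_mul_of_nonneg_right this hq]

theorem select_aux {I : Type*} [Fintype I] [DecidableEq I] (l o : I → ℝ) (hl : ∀ i, 0 ≤ l i)
    (ho : ∀ i, 0 ≤ o i) (ho1 : ∀ i, o i ≤ 1) (d : ℕ) (hd : d ≤ Fintype.card I)
    (hs : ∑ i, o i ≤ d) : ∃ J : Finset I, J.card = d ∧ ∑ i, l i * o i ≤ ∑ i ∈ J, l i := by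
  have hne : (Finset.powersetCard d (Finset.univ : Finset I)).Nonempty :=
    Finset.powersetCard_nonempty.2 (by simpa using hd)
  obtain ⟨J, hJ, hmax⟩ := Finset.exists_max_image _ (fun J => ∑ i ∈ J, l i) hne
  have hJd : J.card = d := (Finset.mem_powersetCard.1 hJ).2
  refine ⟨J, hJd, ?_⟩
  have hex : ∀ j ∈ J, ∀ i ∉ J, l i ≤ l j := by
    intro j hj i hi
    have h1 : i ∉ J.erase j := fun h => hi (Finset.mem_of_mem_erase h)
    have h := hmax (insert i (J.erase j)) (by
      rw [Finset.mem_powersetCard]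
      refine ⟨Finset.subset_univ _, ?_⟩
      rw [Finset.card_insert_of_notMem h1, Finset.card_erase_of_mem hj]
      have := Finset.card_pos.2 ⟨j, hj⟩
      omega)
    rw [Finset.sum_insert h1, ← Finset.add_sum_erase J l hj] at h
    linarith
  rcases J.eq_empty_or_nonempty with h0 | h0
  · have hd0 : d = 0 := by rw [← hJd, h0]; simp
    have : ∀ i, o i = 0 := by
      have h : ∑ i, o i = 0 := le_antisymm (by simpa [hd0] using hs) (Finset.sum_nonneg fun i _ => ho i)
      intro i
      exact (Finset.sum_eq_zero_iff_of_nonneg (fun i _ => ho i)).1 h i (Finset.mem_univ _)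
    simp [this, h0]
  · obtain ⟨j, hj, hmin⟩ := Finset.exists_min_image J l h0
    have key : ∀ i, l i * o i ≤ l j * o i + (if i ∈ J then l i - l j else 0) := by
      intro i
      split_ifs with h
      · nlinarith [hmin i h, ho1 i]
      · nlinarith [hex j hj i h, ho i]
    calc ∑ i, l i * o i ≤ ∑ i, (l j * o i + (if i ∈ J then l i - l j else 0)) :=
          Finset.sum_le_sum fun i _ => key i
      _ = l j * ∑ i, o i + (∑ i ∈ J, l i - d * l j) := by
          rw [Finset.sum_add_distrib, ← Finset.mul_sum, Finset.sum_ite_mem, Finset.univ_inter,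
            Finset.sum_sub_distrib, Finset.sum_const, hJd, nsmul_eq_mul]
      _ ≤ _ := by nlinarith [hl j]

theorem spec_aux {I E : Type*} [Fintype I] [NormedAddCommGroup E] [InnerProductSpace ℂ E]
    [FiniteDimensional ℂ E] (v : I → E) :
    ∃ (u : OrthonormalBasis (Fin (Module.finrank ℂ E)) ℂ E) (s : Fin (Module.finrank ℂ E) → ℝ),
      (∀ x, ∑ α, inner ℂ (v α) (u x) • v α = (s x : ℂ) • u x) ∧
      (∀ x, 0 ≤ s x) ∧
      (∀ y, ∑ α, ‖inner ℂ (v α) y‖ ^ 2 = ∑ x, s x * ‖inner ℂ (u x) y‖ ^ 2) := by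
  obtain ⟨T, hTv⟩ : ∃ T : E →ₗ[ℂ] E, ∀ y, T y = ∑ α, inner ℂ (v α) y • v α :=
    ⟨{ toFun := fun y => ∑ α, inner ℂ (v α) y • v α
       map_add' := fun x y => by simp [inner_add_right, add_smul, Finset.sum_add_distrib]
       map_smul' := fun c y => by simp [inner_smul_right, mul_smul, Finset.smul_sum] }, fun y => rfl⟩
  have hT : T.IsSymmetric := by
    intro x y
    rw [hTv, hTv, sum_inner, inner_sum]
    refine Finset.sum_congr rfl fun α _ => ?_
    rw [inner_smul_left, inner_smul_right, inner_conj_symm, mul_comm]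
  let u := hT.eigenvectorBasis rfl
  let s := hT.eigenvalues rfl
  have hu : ∀ x, T (u x) = (s x : ℂ) • u x := fun x => hT.apply_eigenvectorBasis rfl x
  have hQ : ∀ y, ∑ α, ‖inner ℂ (v α) y‖ ^ 2 = ∑ x, s x * ‖inner ℂ (u x) y‖ ^ 2 := by
    intro y
    have h1 : inner ℂ y (T y) = ((∑ α, ‖inner ℂ (v α) y‖ ^ 2 : ℝ) : ℂ) := by
      rw [hTv, inner_sum]
      push_cast
      refine Finset.sum_congr rfl fun α _ => ?_
      rw [inner_smul_right, ← inner_conj_symm y (v α), Complex.mul_conj']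
    have h2 : inner ℂ y (T y) = ((∑ x, s x * ‖inner ℂ (u x) y‖ ^ 2 : ℝ) : ℂ) := by
      rw [← u.sum_inner_mul_inner]
      push_cast
      refine Finset.sum_congr rfl fun x _ => ?_
      rw [← hT, hu, inner_smul_left, ← inner_conj_symm y (u x), Complex.conj_ofReal,
        ← Complex.conj_mul']
      ring
    exact_mod_cast h1.symm.trans h2
  refine ⟨u, s, fun x => by rw [← hTv, hu], fun x => ?_, hQ⟩
  have h := hQ (u x)
  have h2 : ∑ x', s x' * ‖inner ℂ (u x') (u x)‖ ^ 2 = s x := by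
    rw [Finset.sum_eq_single x]
    · simp
    · intro b _ hb
      rw [u.inner_eq_ite, if_neg hb]; simp
    · simp
  rw [← h2, ← h]
  positivity

theorem frame_aux {I E : Type*} [Fintype I] [DecidableEq I] [NormedAddCommGroup E]
    [InnerProductSpace ℂ E] [FiniteDimensional ℂ E] (v : I → E) (hv : ∀ α, ‖v α‖ = 1)
    (l t : I → ℝ) (hl : ∀ α, 0 ≤ l α)
    (ht : ∀ α, ∑ β, ‖inner ℂ (v β) (v α)‖ ^ 2 = 1 + t α) :
    ∃ (J : Finset I) (w : J → E), Orthonormal ℂ w ∧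
      (∀ y, ∑ α, ‖inner ℂ (w α) y‖ ^ 2 ≤ 2 * ∑ β, ‖inner ℂ (v β) y‖ ^ 2) ∧
      ∑ α, l α - ∑ α : J, l α * ‖inner ℂ (w α) (v α)‖ ^ 2 ≤ 12 * ∑ α, l α * t α := by
  obtain ⟨u, s, hu, hs, hQ⟩ := spec_aux v
  have ht0 : ∀ α, 0 ≤ t α := by
    intro α
    have h := Finset.single_le_sum (f := fun β => ‖inner ℂ (v β) (v α)‖ ^ 2)
      (fun β _ => by positivity) (Finset.mem_univ α)
    have h1 : ‖inner ℂ (v α) (v α)‖ = 1 := by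
      rw [inner_self_eq_norm_sq_to_K, hv]; simp
    simp only [h1] at h
    rw [ht] at h
    linarith
  obtain ⟨p, hp⟩ : ∃ p : I → Fin (Module.finrank ℂ E) → ℝ,
    ∀ α x, p α x = ‖inner ℂ (u x) (v α)‖ ^ 2 := ⟨_, fun _ _ => rfl⟩
  have hp0 : ∀ α x, 0 ≤ p α x := fun α x => by rw [hp]; positivity
  have hp1 : ∀ α, ∑ x, p α x = 1 := fun α => by
    simp_rw [hp]; rw [u.sum_sq_norm_inner_right, hv]; norm_num
  have hps : ∀ α, ∑ x, s x * p α x = 1 + t α := fun α => by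
    simp_rw [hp]; rw [← hQ, ht]
  have hpc : ∀ x, ∑ α, p α x = s x := by
    intro x
    have h := hQ (u x)
    have h2 : ∑ x', s x' * ‖inner ℂ (u x') (u x)‖ ^ 2 = s x := by
      rw [Finset.sum_eq_single x]
      · simp
      · intro b _ hb
        rw [u.inner_eq_ite, if_neg hb]; simp
      · simp
    rw [h2] at h
    rw [← h]
    refine Finset.sum_congr rfl fun α _ => ?_
    rw [hp, norm_inner_symm]
  have hp_zero : ∀ α x, s x = 0 → p α x = 0 := by
    intro α x hx
    have h := Finset.single_le_sum (f := fun α => p α x) (fun β _ => hp0 β x) (Finset.mem_univ α)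
    simp only [hpc, hx] at h
    exact le_antisymm h (hp0 _ _)
  -- expansion vectors
  have hexp : ∀ (c : Fin (Module.finrank ℂ E) → ℂ) x, inner ℂ (u x) (∑ x', c x' • u x') = c x := by
    intro c x
    rw [inner_sum, Finset.sum_eq_single x]
    · simp [inner_smul_right]
    · intro b _ hb
      rw [inner_smul_right, u.inner_eq_ite, if_neg (Ne.symm hb)]; simp
    · simp
  have hq : ∀ α, ∑ x, p α x / s x ≤ 1 := by
    intro α
    set q := ∑ x, p α x / s x with hqdef
    have hq0 : 0 ≤ q := Finset.sum_nonneg fun x _ => div_nonneg (hp0 _ _) (hs _)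
    let y : E := ∑ x, (inner ℂ (u x) (v α) / (s x : ℂ)) • u x
    have h1 : ∑ β, ‖inner ℂ (v β) y‖ ^ 2 = q := by
      rw [hQ]
      refine Finset.sum_congr rfl fun x _ => ?_
      rw [hexp, norm_div, div_pow, ← hp, Complex.norm_real, Real.norm_eq_abs, sq_abs]
      by_cases h : s x = 0
      · simp [h]
      · field_simp
    have h2 : inner ℂ (v α) y = (q : ℂ) := by
      rw [← u.sum_inner_mul_inner, hqdef]
      push_cast
      refine Finset.sum_congr rfl fun x _ => ?_
      rw [hexp, hp, ← inner_conj_symm (v α) (u x)]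
      push_cast
      rw [← Complex.conj_mul']
      ring
    have h3 := Finset.single_le_sum (f := fun β => ‖inner ℂ (v β) y‖ ^ 2)
      (fun β _ => by positivity) (Finset.mem_univ α)
    simp only [h1, h2, Complex.norm_real, Real.norm_eq_abs, sq_abs] at h3
    nlinarith
  let X := {x : Fin (Module.finrank ℂ E) // 1 / 2 ≤ s x}
  have hXsum : ∀ f : Fin (Module.finrank ℂ E) → ℝ,
      ∑ x : X, f x = ∑ x, if 1 / 2 ≤ s x then f x else 0 := by
    intro f
    rw [← Finset.sum_filter]
    exact (Finset.sum_subtype _ (by simp) f).symm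
  have huX : Orthonormal ℂ (fun x : X => u x.1) := u.orthonormal.comp _ Subtype.val_injective
  have hcard : Fintype.card X ≤ Fintype.card I := by
    rw [← finrank_span_eq_card huX.linearIndependent]
    refine le_trans (Submodule.finrank_mono ?_) (finrank_range_le_card (R := ℂ) v)
    rw [Submodule.span_le]
    rintro _ ⟨⟨x, hx⟩, rfl⟩
    have hx0 : (s x : ℂ) ≠ 0 := by
      have : s x ≠ 0 := by intro h; rw [h] at hx; norm_num at hx
      exact_mod_cast this
    have : u x = (s x : ℂ)⁻¹ • ∑ α, inner ℂ (v α) (u x) • v α := by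
      rw [hu, smul_smul, inv_mul_cancel₀ hx0, one_smul]
    simp only [SetLike.mem_coe]
    rw [this]
    exact Submodule.smul_mem _ _ (Submodule.sum_mem _ fun α _ =>
      Submodule.smul_mem _ _ (Submodule.subset_span ⟨α, rfl⟩))
  -- weights
  let o : I → ℝ := fun α => ∑ x : X, p α x / s x
  have ho : ∀ α, o α = ∑ x, if 1 / 2 ≤ s x then p α x / s x else 0 := fun α =>
    hXsum (fun x => p α x / s x)
  have ho0 : ∀ α, 0 ≤ o α := fun α => Finset.sum_nonneg fun x _ => div_nonneg (hp0 _ _) (hs _)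
  have ho1 : ∀ α, o α ≤ 1 := fun α => by
    refine le_trans ?_ (hq α)
    rw [ho]
    refine Finset.sum_le_sum fun x _ => ?_
    split_ifs
    · exact le_rfl
    · exact div_nonneg (hp0 _ _) (hs _)
  have hosum : ∑ α, o α ≤ (Fintype.card X : ℝ) := by
    simp only [o]
    rw [Finset.sum_comm]
    have : ∀ x : X, ∑ α, p α x / s x = 1 := by
      rintro ⟨x, hx⟩
      rw [← Finset.sum_div, hpc, div_self]
      intro h; simp only [h] at hx; norm_num at hx
    simp [this]
  have hscal : ∀ α x, 0 ≤ p α x * (s x + (s x)⁻¹ - 2) := by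
    intro α x
    rcases (hs x).eq_or_lt with h | h
    · rw [hp_zero α x h.symm]; simp
    · refine mul_nonneg (hp0 _ _) ?_
      have : s x + (s x)⁻¹ - 2 = (s x - 1) ^ 2 * (s x)⁻¹ := by field_simp; ring
      rw [this]; positivity
  have hvar : ∀ α, ∑ x, p α x * (s x + (s x)⁻¹ - 2) ≤ t α := by
    intro α
    have : ∑ x, p α x * (s x + (s x)⁻¹ - 2) =
        ∑ x, s x * p α x + ∑ x, p α x / s x - 2 * ∑ x, p α x := by
      rw [Finset.mul_sum, ← Finset.sum_add_distrib, ← Finset.sum_sub_distrib]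
      refine Finset.sum_congr rfl fun x _ => ?_
      rw [div_eq_mul_inv]; ring
    rw [this, hps, hp1]
    linarith [hq α]
  have hsmall : ∀ α x, ¬ 1 / 2 ≤ s x → p α x ≤ 2 * (p α x * (s x + (s x)⁻¹ - 2)) := by
    intro α x hx
    rcases (hs x).eq_or_lt with h | h
    · rw [hp_zero α x h.symm]; simp
    · have h2 : 1 / 2 ≤ s x + (s x)⁻¹ - 2 := by
        have : s x + (s x)⁻¹ - 2 - 1 / 2 = (s x - 2) * (s x - 1 / 2) * (s x)⁻¹ := by
          field_simp; ring
        have h3 : 0 ≤ (s x - 2) * (s x - 1 / 2) * (s x)⁻¹ :=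
          mul_nonneg (by nlinarith) (by positivity)
        linarith
      nlinarith [hp0 α x]
  have ho5 : ∀ α, 1 - o α ≤ 5 * t α := by
    intro α
    have h : ∀ x, p α x - (if 1 / 2 ≤ s x then p α x / s x else 0) ≤
        s x * p α x - p α x + 4 * (p α x * (s x + (s x)⁻¹ - 2)) := by
      intro x
      split_ifs with hx
      · have := hscal α x
        rw [div_eq_mul_inv]
        nlinarith
      · have := hsmall α x hx
        have h1 := mul_nonneg (hs x) (hp0 α x)
        linarith
    have h2 := Finset.sum_le_sum fun x (_ : x ∈ (Finset.univ : Finset _)) => h x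
    rw [Finset.sum_sub_distrib, Finset.sum_add_distrib, Finset.sum_sub_distrib, ← Finset.mul_sum,
      ← ho, hp1, hps] at h2
    linarith [hvar α]
  obtain ⟨J, hJc, hJ⟩ := select_aux l o hl ho0 ho1 _ hcard hosum
  let c : E → EuclideanSpace ℂ X := fun y => WithLp.toLp 2 fun x => inner ℂ (u x.1) y
  have hcn : ∀ y, ‖c y‖ ^ 2 = ∑ x : X, ‖inner ℂ (u x.1) y‖ ^ 2 := fun y => by
    rw [EuclideanSpace.norm_sq_eq]
  obtain ⟨w, hw⟩ := polar_aux (J := J) (E := EuclideanSpace ℂ X)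
    (by simp [hJc]) (fun α => c (v α))
  let W : J → E := fun α => ∑ x : X, (w α) x • u x.1
  have hWin : ∀ α y, inner ℂ (W α) y = inner ℂ (w α) (c y) := by
    intro α y
    simp only [W]
    rw [sum_inner, PiLp.inner_apply]
    refine Finset.sum_congr rfl fun x _ => ?_
    rw [inner_smul_left]
    simp [c, mul_comm]
  refine ⟨J, W, ?_, ?_, ?_⟩
  · rw [orthonormal_iff_ite]
    intro α β
    simp only [W]
    rw [huX.inner_sum, ← w.inner_eq_ite, PiLp.inner_apply]
    refine Finset.sum_congr rfl fun x _ => ?_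
    simp [mul_comm]
  · intro y
    simp_rw [hWin]
    rw [w.sum_sq_norm_inner_right, hcn, hQ, hXsum (fun x => ‖inner ℂ (u x) y‖ ^ 2), Finset.mul_sum]
    refine Finset.sum_le_sum fun x _ => ?_
    have h0 := sq_nonneg ‖inner ℂ (u x) y‖
    split_ifs with h
    · nlinarith
    · have := mul_nonneg (hs x) h0
      linarith
  · have hα : ∀ α : J, 1 - 7 * t α ≤ ‖inner ℂ (W α) (v α)‖ ^ 2 := by
      intro α
      have h1 := hw α
      rw [← hWin] at h1
      have h2 : 1 - 2 * t α ≤ ‖c (v α)‖ ^ 2 := by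
        rw [hcn, hXsum (fun x => ‖inner ℂ (u x) (v α)‖ ^ 2)]
        have h : ∀ x, p α x - 2 * (p α x * (s x + (s x)⁻¹ - 2)) ≤
            if 1 / 2 ≤ s x then ‖inner ℂ (u x) (v α)‖ ^ 2 else 0 := by
          intro x
          rw [← hp]
          split_ifs with hx
          · linarith [hscal α x]
          · linarith [hsmall α x hx]
        have h2 := Finset.sum_le_sum fun x (_ : x ∈ (Finset.univ : Finset _)) => h x
        rw [Finset.sum_sub_distrib, ← Finset.mul_sum, hp1] at h2
        linarith [hvar α]
      have h3 : ∑ β : J, ‖inner ℂ (c (v β)) (c (v α))‖ ^ 2 ≤ 1 + t α := by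
        let z : E := ∑ x, (if 1 / 2 ≤ s x then inner ℂ (u x) (v α) else 0) • u x
        have hz : ∀ β, inner ℂ (c (v β)) (c (v α)) = inner ℂ (v β) z := by
          intro β
          rw [← u.sum_inner_mul_inner, PiLp.inner_apply]
          simp_rw [z, hexp]
          simp only [mul_ite, mul_zero]
          rw [← Finset.sum_filter]
          rw [Finset.sum_subtype (p := fun x => 1 / 2 ≤ s x) _ (by simp)]
          refine Finset.sum_congr rfl fun x _ => ?_
          simp [c, mul_comm]
        simp_rw [hz]
        rw [Finset.sum_coe_sort J (fun β => ‖inner ℂ (v β) z‖ ^ 2)]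
        refine le_trans (Finset.sum_le_univ_sum_of_nonneg fun β => by positivity) ?_
        rw [hQ, ← hps]
        refine Finset.sum_le_sum fun x _ => mul_le_mul_of_nonneg_left ?_ (hs x)
        rw [hexp]
        split_ifs
        · rw [hp]
        · simpa using hp0 α x
      have h4 : 1 - 7 / 2 * t α ≤ ‖inner ℂ (W α) (v α)‖ := by
        refine le_trans ?_ (Complex.re_le_norm _)
        linarith
      have h5 := ht0 α
      have h6 := norm_nonneg (inner ℂ (W α) (v α))
      by_cases h7 : 0 ≤ 1 - 7 / 2 * t α
      · nlinarith
      · nlinarith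
    have hJ1 : ∑ α ∈ J, l α - 7 * ∑ α, l α * t α ≤
        ∑ α : J, l α * ‖inner ℂ (W α) (v α)‖ ^ 2 := by
      have a1 : ∑ α : J, (l α - 7 * (l α * t α)) ≤ ∑ α : J, l α * ‖inner ℂ (W α) (v α)‖ ^ 2 := by
        refine Finset.sum_le_sum fun α _ => ?_
        have := mul_le_mul_of_nonneg_left (hα α) (hl α)
        linarith
      rw [Finset.sum_coe_sort J (fun α => l α - 7 * (l α * t α)), Finset.sum_sub_distrib,
        ← Finset.mul_sum] at a1
      have a2 : ∑ α ∈ J, l α * t α ≤ ∑ α, l α * t α :=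
        Finset.sum_le_univ_sum_of_nonneg fun β => mul_nonneg (hl _) (ht0 _)
      linarith
    have hJ2 : ∑ α, l α - 5 * ∑ α, l α * t α ≤ ∑ α, l α * o α := by
      rw [Finset.mul_sum, ← Finset.sum_sub_distrib]
      refine Finset.sum_le_sum fun α _ => ?_
      have := mul_le_mul_of_nonneg_left (ho5 α) (hl α)
      linarith
    linarith

theorem trace_eig_aux {n : ℕ} {σ : Matrix (Fin n) (Fin n) ℂ} (h : σ.IsHermitian)
    (A : Matrix (Fin n) (Fin n) ℂ) :
    (A * σ).trace = ∑ a, (h.eigenvalues a : ℂ) *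
      (star (h.eigenvectorBasis a).ofLp ⬝ᵥ A *ᵥ (h.eigenvectorBasis a).ofLp) := by
  have h1 : (A * σ).trace = (star (h.eigenvectorUnitary : Matrix (Fin n) (Fin n) ℂ) * (A * σ) *
      (h.eigenvectorUnitary : Matrix (Fin n) (Fin n) ℂ)).trace := by
    rw [Matrix.trace_mul_comm (star _ * (A * σ)), ← mul_assoc, Unitary.mul_star_self_of_mem
      h.eigenvectorUnitary.2, one_mul]
  rw [h1, Matrix.trace]
  refine Finset.sum_congr rfl fun a _ => ?_
  have h2 : σ *ᵥ (h.eigenvectorBasis a).ofLp = (h.eigenvalues a : ℂ) • (h.eigenvectorBasis a).ofLp :=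
    h.mulVec_eigenvectorBasis a
  have h3 : (star (h.eigenvectorUnitary : Matrix (Fin n) (Fin n) ℂ) * (A * σ) *
      (h.eigenvectorUnitary : Matrix (Fin n) (Fin n) ℂ)) a a =
      star (h.eigenvectorBasis a).ofLp ⬝ᵥ (A * σ) *ᵥ (h.eigenvectorBasis a).ofLp := by
    rw [mul_assoc, Matrix.mul_apply]
    refine Finset.sum_congr rfl fun x _ => ?_
    rfl
  rw [Matrix.diag_apply, h3, ← Matrix.mulVec_mulVec, h2, Matrix.mulVec_smul, dotProduct_smul,
    smul_eq_mul]

theorem qf_vec_aux {n : ℕ} (w y : EuclideanSpace ℂ (Fin n)) :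
    star y.ofLp ⬝ᵥ (vecMulVec w.ofLp (star w.ofLp)) *ᵥ y.ofLp = ((‖inner ℂ w y‖ ^ 2 : ℝ) : ℂ) := by
  rw [Matrix.vecMulVec_mulVec]
  have h1 : inner ℂ w y = star w.ofLp ⬝ᵥ y.ofLp := by
    rw [EuclideanSpace.inner_eq_star_dotProduct, dotProduct_comm]
  have h2 : inner ℂ y w = star y.ofLp ⬝ᵥ w.ofLp := by
    rw [EuclideanSpace.inner_eq_star_dotProduct, dotProduct_comm]
  rw [← h1, dotProduct_smul, ← h2, ← inner_conj_symm y w]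
  simp only [MulOpposite.smul_eq_mul_unop, MulOpposite.unop_op]
  push_cast
  rw [Complex.conj_mul']

theorem qf_proj_aux {n : ℕ} {P : Matrix (Fin n) (Fin n) ℂ} (hP : P.IsHermitian) (hPP : P * P = P)
    (y : EuclideanSpace ℂ (Fin n)) :
    star y.ofLp ⬝ᵥ P *ᵥ y.ofLp = ((‖WithLp.toLp 2 (P *ᵥ y.ofLp)‖ ^ 2 : ℝ) : ℂ) := by
  have h : star y.ofLp ⬝ᵥ P *ᵥ y.ofLp =
      inner ℂ (WithLp.toLp 2 (P *ᵥ y.ofLp)) (WithLp.toLp 2 (P *ᵥ y.ofLp)) := by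
    rw [EuclideanSpace.inner_eq_star_dotProduct, dotProduct_comm _ (star _), Matrix.star_mulVec, hP.eq,
      ← Matrix.dotProduct_mulVec, Matrix.mulVec_mulVec, hPP]
  rw [h, inner_self_eq_norm_sq_to_K]
  push_cast
  rfl

theorem orth_aux {k n : ℕ} (σ P : Fin k → Matrix (Fin n) (Fin n) ℂ)
    (hσ : ∀ i, (σ i).PosSemidef) (hP : ∀ i, (P i).IsHermitian) (hPP : ∀ i, P i * P i = P i)
    (hPσ : ∀ i, P i * σ i = σ i) :
    ∃ Q : Fin k → Matrix (Fin n) (Fin n) ℂ,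
        (∀ i, (Q i).IsHermitian) ∧ (∀ i, Q i * Q i = Q i) ∧
        (∀ i j, i ≠ j → Q i * Q j = 0) ∧
        (∀ i, ((2 : ℂ) • ∑ j, P j - Q i).PosSemidef) ∧
        ∑ i, ((σ i).trace.re - (Q i * σ i).trace.re) ≤
          12 * ∑ i, ∑ j ∈ univ.erase i, (P j * σ i).trace.re := by
  obtain ⟨e, he⟩ : ∃ e : ∀ i, OrthonormalBasis (Fin n) ℂ (EuclideanSpace ℂ (Fin n)),
    e = fun i => (hσ i).1.eigenvectorBasis := ⟨_, rfl⟩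
  obtain ⟨μ, hμ⟩ : ∃ μ : Fin k → Fin n → ℝ, μ = fun i => (hσ i).1.eigenvalues := ⟨_, rfl⟩
  have hμ0 : ∀ i a, 0 ≤ μ i a := fun i a => by rw [hμ]; exact (hσ i).eigenvalues_nonneg a
  have hσe : ∀ i a, σ i *ᵥ (e i a).ofLp = (μ i a : ℂ) • (e i a).ofLp := fun i a => by
    rw [he, hμ]; exact (hσ i).1.mulVec_eigenvectorBasis a
  have htr : ∀ A i, (A * σ i).trace = ∑ a, (μ i a : ℂ) *
      (star (e i a).ofLp ⬝ᵥ A *ᵥ (e i a).ofLp) := fun A i => by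
    rw [he, hμ]; exact trace_eig_aux (hσ i).1 A
  have hPe : ∀ i a, μ i a ≠ 0 → P i *ᵥ (e i a).ofLp = (e i a).ofLp := by
    intro i a h
    have h0 : (μ i a : ℂ) ≠ 0 := by exact_mod_cast h
    have h1 : (e i a).ofLp = (μ i a : ℂ)⁻¹ • (σ i *ᵥ (e i a).ofLp) := by
      rw [hσe, smul_smul, inv_mul_cancel₀ h0, one_smul]
    rw [h1, Matrix.mulVec_smul, Matrix.mulVec_mulVec, hPσ]
  let I := {α : Fin k × Fin n // μ α.1 α.2 ≠ 0}
  let v : I → EuclideanSpace ℂ (Fin n) := fun α => e α.1.1 α.1.2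
  let l : I → ℝ := fun α => μ α.1.1 α.1.2
  have hv : ∀ α, ‖v α‖ = 1 := fun α => (e α.1.1).orthonormal.1 _
  let N : Fin k → EuclideanSpace ℂ (Fin n) → ℝ := fun j y => ‖WithLp.toLp 2 (P j *ᵥ y.ofLp)‖ ^ 2
  have hN : ∀ j y, star y.ofLp ⬝ᵥ P j *ᵥ y.ofLp = (N j y : ℂ) := fun j y =>
    qf_proj_aux (hP j) (hPP j) y
  have hsumI : ∀ f : Fin k → Fin n → ℝ, ∑ α : I, f α.1.1 α.1.2 =
      ∑ i, ∑ a, if μ i a ≠ 0 then f i a else 0 := by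
    intro f
    rw [← Fintype.sum_prod_type' (f := fun i a => if μ i a ≠ 0 then f i a else 0),
      ← Finset.sum_filter]
    exact (Finset.sum_subtype (p := fun α : Fin k × Fin n => μ α.1 α.2 ≠ 0) _ (by simp)
      (fun α => f α.1 α.2)).symm
  have hB : ∀ y, ∑ β, ‖inner ℂ (v β) y‖ ^ 2 ≤ ∑ j, N j y := by
    intro y
    rw [hsumI (fun i a => ‖inner ℂ (e i a) y‖ ^ 2)]
    refine Finset.sum_le_sum fun j _ => ?_
    simp only [N]
    rw [← (e j).sum_sq_norm_inner_right]
    refine Finset.sum_le_sum fun a _ => ?_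
    split_ifs with h
    · have : inner ℂ (e j a) y = inner ℂ (e j a) (WithLp.toLp 2 (P j *ᵥ y.ofLp)) := by
        rw [EuclideanSpace.inner_eq_star_dotProduct, EuclideanSpace.inner_eq_star_dotProduct,
          dotProduct_comm, dotProduct_comm _ (star _)]
        conv_lhs => rw [← hPe j a h, Matrix.star_mulVec, (hP j).eq, ← Matrix.dotProduct_mulVec]
      rw [this]
    · positivity
  let t : I → ℝ := fun α => ∑ β, ‖inner ℂ (v β) (v α)‖ ^ 2 - 1
  have htle : ∀ α : I, t α ≤ ∑ j ∈ univ.erase α.1.1, N j (v α) := by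
    intro α
    have h1 := hB (v α)
    rw [← Finset.add_sum_erase _ _ (Finset.mem_univ α.1.1)] at h1
    have h2 : N α.1.1 (v α) = 1 := by
      simp only [N, v]
      rw [hPe _ _ α.2]
      have := hv α
      simp only [v] at this
      rw [show (WithLp.toLp 2 (e α.1.1 α.1.2).ofLp) = e α.1.1 α.1.2 from rfl, this]; norm_num
    simp only [t]
    linarith
  obtain ⟨J, w, hw, hwB, hwl⟩ := frame_aux v hv l t (fun α => hμ0 _ _) (fun α => by simp only [t]; ring)
  let R : J → Matrix (Fin n) (Fin n) ℂ := fun α => vecMulVec (w α).ofLp (star (w α).ofLp)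
  have hRR : ∀ α β, R α * R β = if α = β then R α else 0 := by
    intro α β
    have h1 : star (w α).ofLp ⬝ᵥ (w β).ofLp = if α = β then 1 else 0 := by
      rw [dotProduct_comm, ← EuclideanSpace.inner_eq_star_dotProduct]
      exact (orthonormal_iff_ite.1 hw) α β
    simp only [R]
    rw [Matrix.vecMulVec_mul_vecMulVec, h1]
    split_ifs with h
    · subst h; simp
    · simp
  have hRH : ∀ α, (R α).IsHermitian := by
    intro α
    simp only [R, Matrix.IsHermitian, Matrix.conjTranspose_vecMulVec, star_star]
  let S : Fin k → Finset J := fun i => univ.filter fun α => α.1.1.1 = i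
  let Q : Fin k → Matrix (Fin n) (Fin n) ℂ := fun i => ∑ α ∈ S i, R α
  have hQH : ∀ i, (Q i).IsHermitian := fun i => by
    simp only [Q, Matrix.IsHermitian, Matrix.conjTranspose_sum]
    exact Finset.sum_congr rfl fun α _ => hRH α
  have hQq : ∀ i y, star y.ofLp ⬝ᵥ Q i *ᵥ y.ofLp =
      ((∑ α ∈ S i, ‖inner ℂ (w α) y‖ ^ 2 : ℝ) : ℂ) := by
    intro i y
    simp only [Q, Matrix.sum_mulVec, dotProduct_sum]
    rw [Complex.ofReal_sum]
    exact Finset.sum_congr rfl fun α _ => qf_vec_aux _ _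
  refine ⟨Q, hQH, ?_, ?_, ?_, ?_⟩
  · intro i
    simp only [Q]
    rw [Finset.sum_mul_sum]
    simp_rw [hRR]
    refine Finset.sum_congr rfl fun α hα => ?_
    rw [Finset.sum_ite_eq, if_pos hα]
  · intro i j hij
    simp only [Q]
    rw [Finset.sum_mul_sum]
    refine Finset.sum_eq_zero fun α hα => Finset.sum_eq_zero fun β hβ => ?_
    rw [hRR, if_neg]
    rintro rfl
    simp only [S, Finset.mem_filter] at hα hβ
    exact hij (hα.2.symm.trans hβ.2)
  · intro i
    refine Matrix.PosSemidef.of_dotProduct_mulVec_nonneg ?_ ?_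
    · refine Matrix.IsHermitian.sub ?_ (hQH i)
      simp only [Matrix.IsHermitian, Matrix.conjTranspose_smul, Matrix.conjTranspose_sum]
      simp [fun j => (hP j).eq]
    · intro x
      have h1 := hQq i (WithLp.toLp 2 x)
      have h2 : star x ⬝ᵥ (∑ j, P j) *ᵥ x = ((∑ j, N j (WithLp.toLp 2 x) : ℝ) : ℂ) := by
        rw [Matrix.sum_mulVec, dotProduct_sum, Complex.ofReal_sum]
        exact Finset.sum_congr rfl fun j _ => hN j (WithLp.toLp 2 x)
      simp only at h1
      rw [Matrix.sub_mulVec, dotProduct_sub, Matrix.smul_mulVec, dotProduct_smul, h1, h2, smul_eq_mul,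
        sub_nonneg]
      have h3 : ∑ α ∈ S i, ‖inner ℂ (w α) (WithLp.toLp 2 x)‖ ^ 2 ≤
          2 * ∑ j, N j (WithLp.toLp 2 x) := by
        refine le_trans (Finset.sum_le_univ_sum_of_nonneg fun β => by positivity) ?_
        have := hwB (WithLp.toLp 2 x)
        linarith [hB (WithLp.toLp 2 x)]
      exact_mod_cast h3
  · have a1 : ∑ i, (σ i).trace.re = ∑ α, l α := by
      simp only [l]
      rw [hsumI (fun i a => μ i a)]
      refine Finset.sum_congr rfl fun i _ => ?_
      have := htr 1 i
      rw [one_mul] at this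
      rw [this, Complex.re_sum]
      refine Finset.sum_congr rfl fun a _ => ?_
      have h1 : star (e i a).ofLp ⬝ᵥ (e i a).ofLp = 1 := by
        rw [dotProduct_comm, ← EuclideanSpace.inner_eq_star_dotProduct, (e i).inner_eq_ite]; simp
      rw [Matrix.one_mulVec, h1]
      by_cases h : μ i a = 0 <;> simp [h]
    have a2 : ∑ α : J, l α * ‖inner ℂ (w α) (v α)‖ ^ 2 ≤ ∑ i, (Q i * σ i).trace.re := by
      have b1 : ∑ α : J, l α * ‖inner ℂ (w α) (v α)‖ ^ 2 =
          ∑ i, ∑ α ∈ S i, l α * ‖inner ℂ (w α) (v α)‖ ^ 2 := by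
        simp only [S]
        exact (Finset.sum_fiberwise univ (fun α : J => α.1.1.1) _).symm
      rw [b1]
      refine Finset.sum_le_sum fun i _ => ?_
      have b2 : (Q i * σ i).trace.re = ∑ α ∈ S i, ∑ a, μ i a * ‖inner ℂ (w α) (e i a)‖ ^ 2 := by
        rw [htr, Complex.re_sum, Finset.sum_comm]
        refine Finset.sum_congr rfl fun a _ => ?_
        rw [hQq, ← Complex.ofReal_mul, Complex.ofReal_re, Finset.mul_sum]
      rw [b2]
      refine Finset.sum_le_sum fun α hα => ?_
      have hα' : α.1.1.1 = i := by simpa [S] using hα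
      subst hα'
      exact Finset.single_le_sum (f := fun a => μ α.1.1.1 a * ‖inner ℂ (w α) (e α.1.1.1 a)‖ ^ 2)
        (fun a _ => mul_nonneg (hμ0 _ _) (by positivity)) (Finset.mem_univ α.1.1.2)
    have a3 : ∑ α, l α * t α ≤ ∑ i, ∑ j ∈ univ.erase i, (P j * σ i).trace.re := by
      calc ∑ α, l α * t α ≤ ∑ α : I, l α * ∑ j ∈ univ.erase α.1.1, N j (v α) :=
            Finset.sum_le_sum fun α _ => mul_le_mul_of_nonneg_left (htle α) (hμ0 _ _)
        _ = _ := by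
            simp only [l, v]
            rw [hsumI (fun i a => μ i a * ∑ j ∈ univ.erase i, N j (e i a))]
            refine Finset.sum_congr rfl fun i _ => ?_
            have : ∀ j, (P j * σ i).trace.re = ∑ a, μ i a * N j (e i a) := by
              intro j
              rw [htr, Complex.re_sum]
              refine Finset.sum_congr rfl fun a _ => ?_
              rw [hN, ← Complex.ofReal_mul, Complex.ofReal_re]
            simp_rw [this]
            rw [Finset.sum_comm]
            refine Finset.sum_congr rfl fun a _ => ?_
            rw [← Finset.mul_sum]
            by_cases h : μ i a = 0 <;> simp [h]
    rw [Finset.sum_sub_distrib]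
    linarith

theorem tr_nonneg_aux {n : ℕ} {A B : Matrix (Fin n) (Fin n) ℂ} (hA : A.PosSemidef)
    (hB : B.PosSemidef) : 0 ≤ (A * B).trace.re := by
  rw [trace_eig_aux hB.1, Complex.re_sum]
  refine Finset.sum_nonneg fun a _ => ?_
  rw [Complex.re_ofReal_mul]
  refine mul_nonneg (hB.eigenvalues_nonneg a) ?_
  exact (Complex.le_def.1 (hA.dotProduct_mulVec_nonneg _)).1

theorem par_aux {n : ℕ} {A ρ P : Matrix (Fin n) (Fin n) ℂ} (hA : A.PosSemidef)
    (hρ : ρ.PosSemidef) (hP : P.IsHermitian) :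
    (A * ρ).trace.re ≤ 2 * (A * (P * ρ * P)).trace.re +
      2 * (A * ((1 - P) * ρ * (1 - P))).trace.re := by
  have h1 : (2 * P - 1).IsHermitian := by
    rw [two_mul]; exact (hP.add hP).sub Matrix.isHermitian_one
  have h2 : ((2 * P - 1) * ρ * (2 * P - 1)).PosSemidef := by
    have := hρ.conjTranspose_mul_mul_same (2 * P - 1)
    rwa [h1.eq] at this
  have h3 := tr_nonneg_aux hA h2
  have h4 : A * ρ + A * ((2 * P - 1) * ρ * (2 * P - 1)) =
      A * (P * ρ * P) + A * (P * ρ * P) + (A * ((1 - P) * ρ * (1 - P)) +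
       A * ((1 - P) * ρ * (1 - P))) := by noncomm_ring
  have h5 := congrArg (fun M => (Matrix.trace M).re) h4
  simp only [Matrix.trace_add, Complex.add_re] at h5
  linarith

theorem proj_psd_aux {n : ℕ} {P : Matrix (Fin n) (Fin n) ℂ} (hP : P.IsHermitian)
    (hPP : P * P = P) : P.PosSemidef := by
  have := Matrix.posSemidef_conjTranspose_mul_self P
  rwa [hP.eq, hPP] at this

/-- Lemma 5.2: robust orthogonalization of families of almost-orthogonal projectors.
Inequalities between traces (which are nonnegative reals here) are stated in the
standard partial order on `ℂ`. -/
theorem robust_orthogonalization_of_projectors :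
    ∃ K : ℝ, 0 < K ∧
      ∀ (k n : ℕ), 0 < k → 0 < n →
      ∀ (ε : ℝ) (ρ P : Fin k → Matrix (Fin n) (Fin n) ℂ),
      (∀ i, (ρ i).PosSemidef) →
      (∀ i, (P i).IsHermitian) → (∀ i, P i * P i = P i) →
      (∑ i : Fin k, ∑ j ∈ univ.erase i, (P i * P j * P i * ρ i).trace ≤ (ε : ℂ)) →
      (∑ i : Fin k, ∑ j ∈ univ.erase i, (P i * ρ j).trace ≤ (ε : ℂ)) →
      0 < ε → (ε : ℂ) ≤ (∑ i, ρ i).trace →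
      ∃ Q : Fin k → Matrix (Fin n) (Fin n) ℂ,
        (∀ i, (Q i).IsHermitian) ∧ (∀ i, Q i * Q i = Q i) ∧
        (∀ i j, i ≠ j → Q i * Q j = 0) ∧
        ∑ i : Fin k, ((P i - Q i) * (P i - Q i) * ρ i).trace ≤
          ((K * Real.sqrt ε * Real.sqrt ((∑ i, ρ i).trace.re) : ℝ) : ℂ) := by
  refine ⟨40, by norm_num, ?_⟩
  intro k n _ _ ε ρ P hρ hP hPP h1 h2 hε hεT
  have hPσ : ∀ i, P i * (P i * ρ i * P i) = P i * ρ i * P i := fun i => by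
    rw [← mul_assoc, ← mul_assoc, hPP]
  have hσP : ∀ i, (P i * ρ i * P i) * P i = P i * ρ i * P i := fun i => by
    rw [mul_assoc, hPP]
  have hσ : ∀ i, (P i * ρ i * P i).PosSemidef := fun i => by
    have := (hρ i).conjTranspose_mul_mul_same (P i)
    rwa [(hP i).eq] at this
  have hP1 : ∀ i, (1 - P i).IsHermitian := fun i => Matrix.isHermitian_one.sub (hP i)
  have hτ : ∀ i, ((1 - P i) * ρ i * (1 - P i)).PosSemidef := fun i => by
    have := (hρ i).conjTranspose_mul_mul_same (1 - P i)
    rwa [(hP1 i).eq] at this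
  have hPpsd : ∀ i, (P i).PosSemidef := fun i => proj_psd_aux (hP i) (hPP i)
  obtain ⟨Q, hQ, hQQ, hQo, hQP, hQσ⟩ := orth_aux (fun i => P i * ρ i * P i) P hσ hP hPP hPσ
  refine ⟨Q, hQ, hQQ, hQo, ?_⟩
  have e1 : ∑ i, ∑ j ∈ univ.erase i, (P j * (P i * ρ i * P i)).trace.re ≤ ε := by
    have := (Complex.le_def.1 h1).1
    rw [Complex.ofReal_re, Complex.re_sum] at this
    refine le_trans (le_of_eq ?_) this
    refine Finset.sum_congr rfl fun i _ => ?_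
    rw [Complex.re_sum]
    refine Finset.sum_congr rfl fun j _ => ?_
    rw [show P j * (P i * ρ i * P i) = (P j * P i * ρ i) * P i by noncomm_ring,
      Matrix.trace_mul_comm, ← mul_assoc, ← mul_assoc]
  have e2 : ∑ i, ∑ j ∈ univ.erase i, (P j * ρ i).trace.re ≤ ε := by
    have := (Complex.le_def.1 h2).1
    rw [Complex.ofReal_re, Complex.re_sum] at this
    refine le_trans (le_of_eq ?_) this
    simp_rw [Complex.re_sum]
    refine Finset.sum_comm' ?_
    intro x y
    simp [eq_comm]
  have hYH : ∀ i, (P i - Q i).IsHermitian := fun i => (hP i).sub (hQ i)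
  have hYpsd : ∀ i, ((P i - Q i) * (P i - Q i)).PosSemidef := fun i => by
    have := Matrix.posSemidef_conjTranspose_mul_self (P i - Q i)
    rwa [(hYH i).eq] at this
  have f1 : ∀ i, ((P i - Q i) * (P i - Q i) * (P i * ρ i * P i)).trace.re =
      (P i * ρ i * P i).trace.re - (Q i * (P i * ρ i * P i)).trace.re := by
    intro i
    set s := P i * ρ i * P i with hs
    have : (P i - Q i) * (P i - Q i) * s =
        P i * P i * s - P i * (Q i * s) - Q i * (P i * s) + Q i * Q i * s := by noncomm_ring
    rw [this, hPP, hQQ, hPσ i, Matrix.trace_add, Matrix.trace_sub, Matrix.trace_sub,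
      Matrix.trace_mul_comm (P i) (Q i * s), mul_assoc (Q i) s, hσP i]
    simp [hs]
  have f2 : ∀ i, ((P i - Q i) * (P i - Q i) * ((1 - P i) * ρ i * (1 - P i))).trace.re =
      (Q i * ((1 - P i) * ρ i * (1 - P i))).trace.re := by
    intro i
    set s := (1 - P i) * ρ i * (1 - P i) with hs
    have z1 : P i * s = 0 := by
      rw [hs, ← mul_assoc, ← mul_assoc, mul_sub (P i) 1 (P i), hPP, mul_one, sub_self, zero_mul,
        zero_mul]
    have z2 : s * P i = 0 := by
      rw [hs, mul_assoc, sub_mul 1 (P i) (P i), hPP, one_mul, sub_self, mul_zero]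
    have : (P i - Q i) * (P i - Q i) * s =
        P i * (P i * s) - P i * (Q i * s) - Q i * (P i * s) + Q i * Q i * s := by noncomm_ring
    rw [this, hQQ, z1, Matrix.trace_add, Matrix.trace_sub, Matrix.trace_sub,
      Matrix.trace_mul_comm (P i) (Q i * s), mul_assoc (Q i) s, z2]
    simp
  have f3 : ∀ i, (Q i * ((1 - P i) * ρ i * (1 - P i))).trace.re ≤
      4 * ∑ j ∈ univ.erase i, (P j * ρ i).trace.re +
      4 * ∑ j ∈ univ.erase i, (P j * (P i * ρ i * P i)).trace.re := by
    intro i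
    set s := (1 - P i) * ρ i * (1 - P i) with hs
    have z1 : P i * s = 0 := by
      rw [hs, ← mul_assoc, ← mul_assoc, mul_sub (P i) 1 (P i), hPP, mul_one, sub_self, zero_mul,
        zero_mul]
    have g1 := tr_nonneg_aux (hQP i) (hτ i)
    rw [← hs, sub_mul, Matrix.trace_sub, Complex.sub_re, smul_mul_assoc, Matrix.trace_smul,
      Finset.sum_mul, Matrix.trace_sum, ← Finset.add_sum_erase _ _ (Finset.mem_univ i), z1,
      Matrix.trace_zero, zero_add, smul_eq_mul, show (2 : ℂ) = ((2 : ℝ) : ℂ) by norm_num,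
      Complex.re_ofReal_mul, Complex.re_sum] at g1
    have g2 : ∀ j ∈ univ.erase i, (P j * s).trace.re ≤
        2 * (P j * ρ i).trace.re + 2 * (P j * (P i * ρ i * P i)).trace.re := by
      intro j _
      have h4 : (1 + P i).IsHermitian := Matrix.isHermitian_one.add (hP i)
      have h5 : ((1 + P i) * ρ i * (1 + P i)).PosSemidef := by
        have := (hρ i).conjTranspose_mul_mul_same (1 + P i)
        rwa [h4.eq] at this
      have h6 := tr_nonneg_aux (hPpsd j) h5
      have h7 : P j * s + P j * ((1 + P i) * ρ i * (1 + P i)) =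
          P j * ρ i + P j * ρ i + (P j * (P i * ρ i * P i) + P j * (P i * ρ i * P i)) := by
        rw [hs]; noncomm_ring
      have h8 := congrArg (fun M => (Matrix.trace M).re) h7
      simp only [Matrix.trace_add, Complex.add_re] at h8
      linarith
    have g3 := Finset.sum_le_sum g2
    rw [Finset.sum_add_distrib, ← Finset.mul_sum, ← Finset.mul_sum] at g3
    linarith
  have hmain : ∑ i, ((P i - Q i) * (P i - Q i) * ρ i).trace.re ≤ 40 * ε := by
    have g : ∀ i, ((P i - Q i) * (P i - Q i) * ρ i).trace.re ≤
        2 * ((P i * ρ i * P i).trace.re - (Q i * (P i * ρ i * P i)).trace.re) +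
        2 * (4 * ∑ j ∈ univ.erase i, (P j * ρ i).trace.re +
          4 * ∑ j ∈ univ.erase i, (P j * (P i * ρ i * P i)).trace.re) := by
      intro i
      have := par_aux (hYpsd i) (hρ i) (hP i)
      rw [f1, f2] at this
      linarith [f3 i]
    have g' := Finset.sum_le_sum fun i (_ : i ∈ (Finset.univ : Finset (Fin k))) => g i
    rw [Finset.sum_add_distrib, ← Finset.mul_sum, ← Finset.mul_sum, Finset.sum_add_distrib,
      ← Finset.mul_sum, ← Finset.mul_sum] at g'
    linarith
  have hT : ε ≤ (∑ i, ρ i).trace.re := by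
    have := (Complex.le_def.1 hεT).1
    rwa [Complex.ofReal_re] at this
  have hfin : 40 * ε ≤ 40 * Real.sqrt ε * Real.sqrt ((∑ i, ρ i).trace.re) := by
    have a := Real.sqrt_le_sqrt hT
    have b := Real.mul_self_sqrt hε.le
    nlinarith [Real.sqrt_nonneg ε]
  rw [Complex.le_def]
  constructor
  · rw [Complex.re_sum, Complex.ofReal_re]
    exact hmain.trans hfin
  · rw [Complex.im_sum, Complex.ofReal_im]
    refine Finset.sum_eq_zero fun i _ => ?_
    have h3 : ((P i - Q i) * ρ i * (P i - Q i)).PosSemidef := by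
      have := (hρ i).conjTranspose_mul_mul_same (P i - Q i)
      rwa [(hYH i).eq] at this
    have h4 := (Complex.le_def.1 h3.trace_nonneg).2
    rw [mul_assoc, Matrix.trace_mul_comm, ← h4]
    rfl
end

section
/- Let A and ρ be n×n positive semidefinite complex matrices and let Π be an n×n orthogonal projection. Set a := Tr(Aρ) and c := Tr((I−Π)A(I−Π)ρ); both a and c are nonnegative reals. Then Tr(ΠAΠρ) ≤ (√a + √c)² ≤ 2(a + c). -/
open Matrix
open scoped ComplexOrder

section helpers
attribute [local instance] Matrix.frobeniusNormedAddCommGroup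

open scoped MatrixOrder in
lemma pb_factor {n : ℕ} {A : Matrix (Fin n) (Fin n) ℂ} (hA : A.PosSemidef) :
    ∃ B : Matrix (Fin n) (Fin n) ℂ, A = Bᴴ * B := by
  obtain ⟨B, hB⟩ := CStarAlgebra.nonneg_iff_eq_star_mul_self.mp hA.nonneg
  exact ⟨B, hB⟩

lemma pb_norm {n : ℕ} (M : Matrix (Fin n) (Fin n) ℂ) :
    (Mᴴ * M).trace = ((‖M‖ ^ 2 : ℝ) : ℂ) := by
  rw [Matrix.frobenius_norm_def, ← Real.sqrt_eq_rpow, Real.sq_sqrt (by positivity)]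
  simp only [Matrix.trace, Matrix.diag, Matrix.mul_apply, Matrix.conjTranspose_apply]
  rw [Finset.sum_comm]
  push_cast
  refine Finset.sum_congr rfl fun i _ => Finset.sum_congr rfl fun j _ => ?_
  have := Complex.conj_mul' (M i j)
  simpa using this

lemma pb_tr {n : ℕ} (B C X : Matrix (Fin n) (Fin n) ℂ) (hX : X.IsHermitian) :
    (X * (Bᴴ * B) * X * (Cᴴ * C)).trace = ((‖B * X * Cᴴ‖ ^ 2 : ℝ) : ℂ) := by
  rw [← pb_norm, ← Matrix.mul_assoc, Matrix.trace_mul_comm]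
  simp only [Matrix.conjTranspose_mul, Matrix.conjTranspose_conjTranspose, hX.eq,
    Matrix.mul_assoc]

lemma pb_main {n : ℕ} (A ρ Pm : Matrix (Fin n) (Fin n) ℂ)
    (hA : A.PosSemidef) (hρ : ρ.PosSemidef) (hPm : Pm.IsHermitian) :
    (Pm * A * Pm * ρ).trace ≤
      (((Real.sqrt ((A * ρ).trace.re) +
          Real.sqrt (((1 - Pm) * A * (1 - Pm) * ρ).trace.re)) ^ 2 : ℝ) : ℂ) ∧
    (Real.sqrt ((A * ρ).trace.re) +
        Real.sqrt (((1 - Pm) * A * (1 - Pm) * ρ).trace.re)) ^ 2 ≤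
      2 * ((A * ρ).trace.re + ((1 - Pm) * A * (1 - Pm) * ρ).trace.re) := by
  obtain ⟨B, rfl⟩ := pb_factor hA
  obtain ⟨C, rfl⟩ := pb_factor hρ
  have h1 := pb_tr B C 1 Matrix.isHermitian_one
  rw [Matrix.one_mul, Matrix.mul_one, Matrix.mul_one] at h1
  rw [pb_tr B C Pm hPm, h1, pb_tr B C (1 - Pm) (Matrix.isHermitian_one.sub hPm),
    Complex.ofReal_re, Complex.ofReal_re, Real.sqrt_sq (norm_nonneg _),
    Real.sqrt_sq (norm_nonneg _)]
  constructor
  · rw [Complex.real_le_real]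
    have h : B * Pm * Cᴴ = B * Cᴴ - B * (1 - Pm) * Cᴴ := by
      rw [Matrix.mul_sub, Matrix.sub_mul, Matrix.mul_one]; abel
    have h2 : ‖B * Pm * Cᴴ‖ ≤ ‖B * Cᴴ‖ + ‖B * (1 - Pm) * Cᴴ‖ := by
      rw [h]; exact norm_sub_le _ _
    exact pow_le_pow_left₀ (norm_nonneg _) h2 2
  · nlinarith [sq_nonneg (‖B * Cᴴ‖ - ‖B * (1 - Pm) * Cᴴ‖)]
end helpers

/-- First inequality of Fact `posblocks`: for `A, ρ ⪰ 0` and an orthogonal projection `Π`,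
writing `a = Tr(Aρ)` and `c = Tr((I−Π)A(I−Π)ρ)` (both nonnegative reals),
we have `Tr(ΠAΠρ) ≤ (√a + √c)² ≤ 2(a + c)`. -/
theorem posblocks_first (n : ℕ) (A ρ Pm : Matrix (Fin n) (Fin n) ℂ)
    (hA : A.PosSemidef) (hρ : ρ.PosSemidef)
    (hPm : Pm.IsHermitian) (hPm2 : Pm * Pm = Pm) :
    (Pm * A * Pm * ρ).trace ≤
      (((Real.sqrt ((A * ρ).trace.re) +
          Real.sqrt (((1 - Pm) * A * (1 - Pm) * ρ).trace.re)) ^ 2 : ℝ) : ℂ) ∧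
    (Real.sqrt ((A * ρ).trace.re) +
        Real.sqrt (((1 - Pm) * A * (1 - Pm) * ρ).trace.re)) ^ 2 ≤
      2 * ((A * ρ).trace.re + ((1 - Pm) * A * (1 - Pm) * ρ).trace.re) := by
  exact pb_main A ρ Pm hA hρ hPm
end

section
/- There exist universal constants c > 0 and K > 0 such that the following holds for all positive integers k, m, n. Let ρ_1, …, ρ_k and ρ be m×m positive semidefinite complex matrices with ∑_{i=1}^k ρ_i ≤ ρ in the Loewner order, let Ŷ_1, …, Ŷ_k be n×m complex matrices with ∑_{i=1}^k Ŷ_i Ŷ_iᴴ ≤ I_n, and let α > 0 satisfy ∑_{i≠j} Tr(Ŷ_iᴴ (Ŷ_j Ŷ_jᴴ) Ŷ_i ρ_i) ≤ α · Tr(ρ). Then there exist n×n orthogonal projections Π_1, …, Π_k with Π_i Π_j = 0 for all i ≠ j, such that ∑_{i=1}^k Tr(Ŷ_iᴴ (I_n − Π_i) Ŷ_i ρ_i) ≤ K · α^c · Tr(ρ). -/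
open Matrix Finset
open scoped ComplexOrder

namespace OrthLem
section
set_option linter.unusedSectionVars false
open scoped MatrixOrder

variable {ι κ : Type*} [Fintype ι] [DecidableEq ι] [Fintype κ] [DecidableEq κ]

lemma spec {A : Matrix ι ι ℂ} (hA : A.IsHermitian) :
    ∃ (U : Matrix ι ι ℂ) (l : ι → ℝ), Uᴴ * U = 1 ∧ U * Uᴴ = 1 ∧
      A = U * diagonal (fun a => (l a : ℂ)) * Uᴴ ∧ (A.PosSemidef → ∀ a, 0 ≤ l a) ∧
      (univ.filter (fun a => l a ≠ 0)).card = A.rank := by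
  refine ⟨hA.eigenvectorUnitary, hA.eigenvalues, ?_, ?_, ?_, ?_, ?_⟩
  · exact Unitary.coe_star_mul_self _
  · exact Unitary.coe_mul_star_self _
  · conv_lhs => rw [hA.spectral_theorem, Unitary.conjStarAlgAut_apply]
    rfl
  · intro h a
    exact h.eigenvalues_nonneg a
  · rw [hA.rank_eq_card_non_zero_eigs, Fintype.card_subtype]

lemma diag_entry (U : Matrix κ ι ℂ) (f : ι → ℝ) (e : κ) :
    (U * diagonal (fun a => (f a : ℂ)) * Uᴴ) e e = ((∑ a, ‖U e a‖ ^ 2 * f a : ℝ) : ℂ) := by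
  rw [Matrix.mul_apply]
  push_cast
  refine Finset.sum_congr rfl fun a _ => ?_
  rw [mul_diagonal, conjTranspose_apply, ← Complex.conj_mul']
  simp only [RCLike.star_def]; ring

lemma conj_le {A B : Matrix ι ι ℂ} (h : A ≤ B) (N : Matrix ι κ ℂ) :
    Nᴴ * A * N ≤ Nᴴ * B * N := by
  rw [Matrix.le_iff] at *
  have := h.conjTranspose_mul_mul_same N
  simpa [Matrix.mul_sub, Matrix.sub_mul] using this

lemma conj_le' {A B : Matrix ι ι ℂ} (h : A ≤ B) (N : Matrix κ ι ℂ) :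
    N * A * Nᴴ ≤ N * B * Nᴴ := by
  simpa using conj_le h Nᴴ

lemma diag_le {f g : ι → ℝ} (h : ∀ a, f a ≤ g a) :
    diagonal (fun a => (f a : ℂ)) ≤ diagonal (fun a => (g a : ℂ)) := by
  rw [Matrix.le_iff, diagonal_sub, posSemidef_diagonal_iff]
  intro a
  simpa using h a

lemma smul_le {A B : Matrix ι ι ℂ} {t : ℝ} (ht : 0 ≤ t) (h : A ≤ B) : t • A ≤ t • B := by
  rw [Matrix.le_iff] at *
  rw [← smul_sub]
  exact h.smul ht

lemma flip {A : Matrix ι κ ℂ} {t : ℝ} (ht : 0 < t) (h : Aᴴ * A ≤ t • (1 : Matrix κ κ ℂ)) :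
    A * Aᴴ ≤ t • (1 : Matrix ι ι ℂ) := by
  have h1 := conj_le' h A
  have h2 : 0 ≤ (t • (1 : Matrix ι ι ℂ) - A * Aᴴ) * (t • (1 : Matrix ι ι ℂ) - A * Aᴴ) := by
    rw [Matrix.nonneg_iff_posSemidef]
    have := posSemidef_conjTranspose_mul_self (t • (1 : Matrix ι ι ℂ) - A * Aᴴ)
    simpa [conjTranspose_sub, conjTranspose_smul] using this
  have h3 : 0 ≤ t • (t • (1 : Matrix ι ι ℂ) - A * Aᴴ) := by
    have h4 := add_nonneg h2 (sub_nonneg.2 h1)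
    convert h4 using 1
    simp only [Matrix.mul_sub, Matrix.sub_mul, Matrix.mul_smul, Matrix.smul_mul, Matrix.mul_one,
      Matrix.one_mul, Matrix.mul_assoc, smul_sub]
    abel
  have h5 := smul_le (inv_nonneg.2 ht.le) h3
  rw [smul_smul, inv_mul_cancel₀ ht.ne', one_smul, smul_zero] at h5
  exact sub_nonneg.1 h5

lemma tr_nonneg {A B : Matrix ι ι ℂ} (hA : 0 ≤ A) (hB : B.PosSemidef) : 0 ≤ (A * B).trace := by
  rw [Matrix.nonneg_iff_posSemidef] at hA
  obtain ⟨N, rfl⟩ : ∃ N : Matrix ι ι ℂ, B = Nᴴ * N := by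
    have := CStarAlgebra.nonneg_iff_eq_star_mul_self.1 (Matrix.nonneg_iff_posSemidef.2 hB)
    exact this
  rw [← Matrix.mul_assoc, Matrix.trace_mul_comm, ← Matrix.mul_assoc]
  exact (hA.mul_mul_conjTranspose_same N).trace_nonneg

lemma tr_mono {A A' B : Matrix ι ι ℂ} (hA : A ≤ A') (hB : B.PosSemidef) :
    (A * B).trace.re ≤ (A' * B).trace.re := by
  have := tr_nonneg (sub_nonneg.2 hA) hB
  rw [Matrix.sub_mul, trace_sub, sub_nonneg] at this
  exact (Complex.le_def.1 this).1

lemma tr_split (a b : Matrix ι κ ℂ) {M : Matrix ι ι ℂ} (hM : 0 ≤ M) {r : Matrix κ κ ℂ}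
    (hr : r.PosSemidef) : ((a + b)ᴴ * M * (a + b) * r).trace.re ≤
      2 * (aᴴ * M * a * r).trace.re + 2 * (bᴴ * M * b * r).trace.re := by
  have h := conj_le hM (a - b)
  have h1 := tr_mono h hr
  simp only [conjTranspose_sub, conjTranspose_add, Matrix.mul_sub, Matrix.sub_mul, Matrix.mul_add,
    Matrix.add_mul, trace_sub, trace_add, Complex.sub_re, Complex.add_re, Matrix.mul_zero,
    Matrix.zero_mul, trace_zero, Complex.zero_re] at h1 ⊢
  linarith

lemma cut {D : Matrix ι ι ℂ} (hD : 0 ≤ D) {t : ℝ} (ht : 0 < t) :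
    ∃ Q : Matrix ι ι ℂ, Qᴴ = Q ∧ Q * Q = Q ∧ Q * D * Q ≤ t • (1 : Matrix ι ι ℂ) ∧
      t • (1 - Q) ≤ D := by
  rw [Matrix.nonneg_iff_posSemidef] at hD
  obtain ⟨U, l, hU, hU', hDe, hl, -⟩ := spec hD.1
  have hl := hl hD
  have key : ∀ f g : ι → ℝ, (U * diagonal (fun a => (f a : ℂ)) * Uᴴ) *
      (U * diagonal (fun a => (g a : ℂ)) * Uᴴ) =
      U * diagonal (fun a => ((f a * g a : ℝ) : ℂ)) * Uᴴ := by
    intro f g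
    calc _ = U * diagonal (fun a => (f a : ℂ)) * (Uᴴ * U) * diagonal (fun a => (g a : ℂ)) * Uᴴ := by
          simp only [Matrix.mul_assoc]
      _ = _ := by
          rw [hU, Matrix.mul_one, Matrix.mul_assoc U, diagonal_mul_diagonal]
          simp
  have one : (1 : Matrix ι ι ℂ) = U * diagonal (fun a => ((1 : ℝ) : ℂ)) * Uᴴ := by
    simp [hU']
  have smul : ∀ (f : ι → ℝ), t • (U * diagonal (fun a => (f a : ℂ)) * Uᴴ) =
      U * diagonal (fun a => ((t * f a : ℝ) : ℂ)) * Uᴴ := by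
    intro f
    rw [← Matrix.smul_mul, ← Matrix.mul_smul, ← diagonal_smul]
    congr 3
    ext a
    simp
  refine ⟨U * diagonal (fun a => ((if l a ≤ t then 1 else 0 : ℝ) : ℂ)) * Uᴴ, ?_, ?_, ?_, ?_⟩
  · simp only [conjTranspose_mul, conjTranspose_conjTranspose, diagonal_conjTranspose,
      Matrix.mul_assoc]
    congr 3
    ext a
    simp
  · rw [key]; congr 3; ext a; split_ifs <;> simp
  · rw [hDe, key, key, one, smul]
    refine conj_le' (diag_le fun a => ?_) U
    split_ifs with h <;> simp [h, ht.le]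
  · nth_rw 1 [one]
    rw [← Matrix.sub_mul, ← Matrix.mul_sub, diagonal_sub]
    simp only [← Complex.ofReal_sub]
    rw [smul]
    conv_rhs => rw [hDe]
    refine conj_le' (diag_le fun a => ?_) U
    have := hl a
    split_ifs with h
    · simpa
    · simp; linarith

lemma row_sum {U : Matrix ι ι ℂ} {l : ι → ℝ} (hU : Uᴴ * U = 1) (hU' : U * Uᴴ = 1) (e : ι) :
    ∑ e', ‖(U * diagonal (fun a => (l a : ℂ)) * Uᴴ - 1) e e'‖ ^ 2 =
      ∑ a, ‖U e a‖ ^ 2 * (l a - 1) ^ 2 := by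
  have h1 : U * diagonal (fun a => (l a : ℂ)) * Uᴴ - 1 =
      U * diagonal (fun a => ((l a - 1 : ℝ) : ℂ)) * Uᴴ := by
    have : (1 : Matrix ι ι ℂ) = U * diagonal (fun a => ((1 : ℝ) : ℂ)) * Uᴴ := by
      simp [hU']
    conv_lhs => rw [this]
    rw [← Matrix.sub_mul, ← Matrix.mul_sub, diagonal_sub]
    simp
  rw [h1]
  have h2 := diag_entry U (fun a => (l a - 1) ^ 2) e
  have h3 := diag_entry (U * diagonal (fun a => ((l a - 1 : ℝ) : ℂ)) * Uᴴ) (fun a => 1) e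
  have h4 : (U * diagonal (fun a => ((l a - 1 : ℝ) : ℂ)) * Uᴴ) *
      diagonal (fun a => ((1 : ℝ) : ℂ)) * (U * diagonal (fun a => ((l a - 1 : ℝ) : ℂ)) * Uᴴ)ᴴ =
      U * diagonal (fun a => (((l a - 1) ^ 2 : ℝ) : ℂ)) * Uᴴ := by
    have h5 : (U * diagonal (fun a => ((l a - 1 : ℝ) : ℂ)) * Uᴴ)ᴴ =
        U * diagonal (fun a => ((l a - 1 : ℝ) : ℂ)) * Uᴴ := by
      simp only [conjTranspose_mul, conjTranspose_conjTranspose, diagonal_conjTranspose,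
        Matrix.mul_assoc]
      congr 3
      ext a
      simp
    rw [h5]
    calc _ = U * diagonal (fun a => ((l a - 1 : ℝ) : ℂ)) * (Uᴴ * U) *
          diagonal (fun a => ((l a - 1 : ℝ) : ℂ)) * Uᴴ := by
          simp only [Matrix.mul_assoc, Complex.ofReal_one, diagonal_one, Matrix.one_mul]
      _ = _ := by
          rw [hU, Matrix.mul_one, Matrix.mul_assoc U, diagonal_mul_diagonal]
          simp [sq]
  rw [h4, h2] at h3
  have := Complex.ofReal_injective h3
  rw [this]
  simp

lemma polar (R : Matrix ι ι ℂ) : ∃ W : Matrix ι ι ℂ, Wᴴ * W = 1 ∧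
    ∀ e, (((R - W)ᴴ * (R - W)) e e).re ≤ ∑ e', ‖(Rᴴ * R - 1 : Matrix ι ι ℂ) e e'‖ ^ 2 := by
  have hG := posSemidef_conjTranspose_mul_self R
  obtain ⟨U, l, hU, hU', hGe, hl, -⟩ := spec hG.1
  replace hl := hl hG
  have hF : (R * U)ᴴ * (R * U) = diagonal (fun a => (l a : ℂ)) := by
    rw [conjTranspose_mul]
    calc _ = Uᴴ * (Rᴴ * R) * U := by simp only [Matrix.mul_assoc]
      _ = (Uᴴ * U) * diagonal (fun a => (l a : ℂ)) * (Uᴴ * U) := by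
        rw [hGe]; simp only [Matrix.mul_assoc]
      _ = _ := by rw [hU]; simp
  set F := R * U with hFdef
  obtain ⟨B, hB, hFB⟩ : ∃ B : Matrix ι ι ℂ, Bᴴ * B = 1 ∧
      F = B * diagonal (fun a => (Real.sqrt (l a) : ℂ)) := by
    let v : ι → EuclideanSpace ℂ ι := fun a =>
      WithLp.toLp 2 (fun r => ((Real.sqrt (l a))⁻¹ : ℂ) * F r a)
    have hFe : ∀ a b, ∑ r, star (F r a) * F r b = if a = b then (l a : ℂ) else 0 := by
      intro a b
      have := congrFun (congrFun hF a) b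
      rw [Matrix.mul_apply, diagonal_apply] at this
      simpa using this
    have hv : Orthonormal ℂ (Set.domRestrict {a | l a ≠ 0} v) := by
      rw [orthonormal_iff_ite]
      rintro ⟨a, ha⟩ ⟨b, hb⟩
      have ha' : l a ≠ 0 := ha
      have h1 : (Real.sqrt (l a) : ℂ) ≠ 0 := by
        simpa using (Real.sqrt_ne_zero (hl a)).2 ha'
      have h2 : (Real.sqrt (l a) : ℂ) * Real.sqrt (l a) = l a := by
        rw [← Complex.ofReal_mul, Real.mul_self_sqrt (hl a)]
      have : inner ℂ (v a) (v b) = ((Real.sqrt (l a))⁻¹ : ℂ) * ((Real.sqrt (l b))⁻¹ : ℂ) *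
          ∑ r, star (F r a) * F r b := by
        rw [mul_sum, PiLp.inner_apply]
        refine sum_congr rfl fun r _ => ?_
        simp [v]
        ring
      change inner ℂ (v a) (v b) = _
      simp only [this, hFe, Subtype.mk.injEq]
      split_ifs with hab
      · subst hab
        rw [← h2]; field_simp
      · simp
    obtain ⟨b, hb⟩ := hv.exists_orthonormalBasis_extension_of_card_eq (by simp)
    refine ⟨Matrix.of fun r a => b a r, ?_, ?_⟩
    · ext a c
      have := orthonormal_iff_ite.1 b.orthonormal a c
      rw [PiLp.inner_apply] at this
      rw [Matrix.mul_apply, Matrix.one_apply, ← this]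
      refine sum_congr rfl fun r _ => ?_
      simp [mul_comm]
    · ext r a
      rw [mul_diagonal, of_apply]
      by_cases ha : l a = 0
      · have h1 := hFe a a
        have h2 : ∑ r, ‖F r a‖ ^ 2 = 0 := by
          apply Complex.ofReal_injective
          push_cast
          rw [if_pos rfl, ha] at h1
          simpa [Complex.conj_mul'] using h1
        rw [sum_eq_zero_iff_of_nonneg (fun _ _ => by positivity)] at h2
        have := h2 r (mem_univ _)
        simp at this
        simp [ha, this]
      · have h1 : (Real.sqrt (l a) : ℂ) ≠ 0 := by
          simpa using (Real.sqrt_ne_zero (hl a)).2 ha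
        rw [hb a ha]
        simp only [v]
        field_simp
  have hR : R = F * Uᴴ := by rw [hFdef, Matrix.mul_assoc, hU', Matrix.mul_one]
  refine ⟨B * Uᴴ, ?_, fun e => ?_⟩
  · rw [conjTranspose_mul, conjTranspose_conjTranspose]
    calc _ = U * (Bᴴ * B) * Uᴴ := by simp only [Matrix.mul_assoc]
      _ = _ := by rw [hB, Matrix.mul_one, hU']
  · rw [hGe, row_sum hU hU']
    have h1 : R - B * Uᴴ = B * diagonal (fun a => ((Real.sqrt (l a) - 1 : ℝ) : ℂ)) * Uᴴ := by
      rw [hR, hFB, ← Matrix.sub_mul]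
      congr 1
      have : B = B * diagonal (fun a => (1 : ℂ)) := by simp
      conv_lhs => rw [this]
      rw [Matrix.mul_assoc, ← Matrix.mul_sub, diagonal_one, Matrix.one_mul, ← diagonal_one,
        diagonal_sub]
      simp
    have h2 : (R - B * Uᴴ)ᴴ * (R - B * Uᴴ) =
        U * diagonal (fun a => (((Real.sqrt (l a) - 1) ^ 2 : ℝ) : ℂ)) * Uᴴ := by
      rw [h1, conjTranspose_mul, conjTranspose_mul, conjTranspose_conjTranspose,
        diagonal_conjTranspose]
      calc _ = U * star (diagonal (fun a => ((Real.sqrt (l a) - 1 : ℝ) : ℂ))) * (Bᴴ * B) *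
            diagonal (fun a => ((Real.sqrt (l a) - 1 : ℝ) : ℂ)) * Uᴴ := by
            simp only [Matrix.mul_assoc, star_eq_conjTranspose, diagonal_conjTranspose]
        _ = _ := by
          rw [hB, Matrix.mul_one, Matrix.mul_assoc U, star_eq_conjTranspose,
            diagonal_conjTranspose, diagonal_mul_diagonal]
          simp [sq]
    rw [h2, diag_entry, Complex.ofReal_re]
    refine sum_le_sum fun a _ => mul_le_mul_of_nonneg_left ?_ (by positivity)
    have h3 := Real.sqrt_nonneg (l a)
    have h4 := Real.sq_sqrt (hl a)
    set s := Real.sqrt (l a)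
    rw [← h4]
    have : (s ^ 2 - 1) ^ 2 - (s - 1) ^ 2 = (s - 1) ^ 2 * (s * (s + 2)) := by ring
    have h5 : 0 ≤ (s - 1) ^ 2 * (s * (s + 2)) := by positivity
    linarith

lemma hfun (R : Matrix ι κ ℂ) : ∃ h : κ → ℝ, (∀ e, 0 ≤ h e) ∧ (∀ e, h e ≤ 1) ∧
    ∑ e, h e ≤ Fintype.card ι ∧
    ∀ e, 1 - h e ≤ ∑ e', ‖(Rᴴ * R - 1 : Matrix κ κ ℂ) e e'‖ ^ 2 := by
  have hG := posSemidef_conjTranspose_mul_self R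
  obtain ⟨U, l, hU, hU', hGe, hl, hr⟩ := spec hG.1
  have hrow : ∀ e, ∑ a, ‖U e a‖ ^ 2 = 1 := by
    intro e
    have := diag_entry U (fun _ => 1) e
    simp [hU'] at this
    apply Complex.ofReal_injective
    simpa using this.symm
  have hcol : ∀ a, ∑ e, ‖U e a‖ ^ 2 = 1 := by
    intro a
    have := diag_entry Uᴴ (fun _ => 1) a
    simp [hU] at this
    apply Complex.ofReal_injective
    simpa using this.symm
  have hsub : ∀ e, 1 - ∑ a, (if l a ≠ 0 then ‖U e a‖ ^ 2 else 0) =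
      ∑ a, if l a ≠ 0 then 0 else ‖U e a‖ ^ 2 := by
    intro e
    rw [← hrow e, ← sum_sub_distrib]
    refine sum_congr rfl fun a _ => ?_
    split_ifs <;> simp
  refine ⟨fun e => ∑ a, if l a ≠ 0 then ‖U e a‖ ^ 2 else 0, ?_, ?_, ?_, ?_⟩
  · intro e
    exact sum_nonneg fun a _ => by split_ifs <;> positivity
  · intro e
    have : 0 ≤ ∑ a, if l a ≠ 0 then 0 else ‖U e a‖ ^ 2 :=
      sum_nonneg fun a _ => by split_ifs <;> positivity
    have := hsub e
    linarith
  · rw [sum_comm]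
    have : ∀ a, ∑ e, (if l a ≠ 0 then ‖U e a‖ ^ 2 else 0) = if l a ≠ 0 then (1 : ℝ) else 0 := by
      intro a
      split_ifs
      · exact hcol a
      · simp
    rw [sum_congr rfl fun a _ => this a, sum_boole, hr]
    have := (rank_mul_le_right Rᴴ R).trans (rank_le_card_height R)
    exact_mod_cast this
  · intro e
    rw [hGe, row_sum hU hU', hsub]
    refine sum_le_sum fun a _ => ?_
    split_ifs with h
    · positivity
    · simp only [not_not] at h
      simp [h]

lemma select (x h : κ → ℝ) (n : ℕ) (hx : ∀ e, 0 ≤ x e) (h0 : ∀ e, 0 ≤ h e) (h1 : ∀ e, h e ≤ 1)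
    (hs : ∑ e, h e ≤ n) (hn : n ≤ Fintype.card κ) :
    ∃ S : Finset κ, S.card = n ∧ ∑ e ∈ Sᶜ, x e ≤ ∑ e, x e * (1 - h e) := by
  have hne : (powersetCard n (univ : Finset κ)).Nonempty := by
    rw [powersetCard_nonempty]; simpa using hn
  obtain ⟨S, hS, hmax⟩ := exists_max_image _ (fun S => ∑ e ∈ S, x e) hne
  have hc : S.card = n := (mem_powersetCard.1 hS).2
  refine ⟨S, hc, ?_⟩
  have ex : ∀ e ∈ S, ∀ e' ∈ Sᶜ, x e' ≤ x e := by
    intro e he e' he'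
    rw [mem_compl] at he'
    have hni : e' ∉ S.erase e := fun h => he' (mem_of_mem_erase h)
    have := hmax (insert e' (S.erase e)) (by
      rw [mem_powersetCard]
      refine ⟨subset_univ _, ?_⟩
      rw [card_insert_of_notMem hni, card_erase_of_mem he, hc]
      have : 0 < S.card := card_pos.2 ⟨e, he⟩
      omega)
    simp only [sum_insert hni] at this
    rw [← add_sum_erase S x he] at this
    linarith
  obtain ⟨t, ht, htS, htc⟩ : ∃ t : ℝ, 0 ≤ t ∧ (∀ e ∈ S, t ≤ x e) ∧ ∀ e ∈ Sᶜ, x e ≤ t := by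
    rcases (Sᶜ).eq_empty_or_nonempty with h | h
    · exact ⟨0, le_rfl, fun e _ => hx e, by simp [h]⟩
    · obtain ⟨e', he', hm⟩ := exists_max_image _ x h
      exact ⟨x e', hx e', fun e he => ex e he e' he', hm⟩
  rw [← sum_add_sum_compl S h] at hs
  rw [← sum_add_sum_compl S (fun e => x e * (1 - h e))]
  have a1 : ∑ e ∈ Sᶜ, x e * h e ≤ t * ∑ e ∈ Sᶜ, h e := by
    rw [mul_sum]; exact sum_le_sum fun e he => mul_le_mul_of_nonneg_right (htc e he) (h0 e)
  have a2 : t * (n - ∑ e ∈ S, h e) ≤ ∑ e ∈ S, x e * (1 - h e) := by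
    have : (n : ℝ) - ∑ e ∈ S, h e = ∑ e ∈ S, (1 - h e) := by simp [hc]
    rw [this, mul_sum]
    exact sum_le_sum fun e he => mul_le_mul_of_nonneg_right (htS e he) (by linarith [h1 e])
  have a3 : t * ∑ e ∈ Sᶜ, h e ≤ t * (n - ∑ e ∈ S, h e) :=
    mul_le_mul_of_nonneg_left (by linarith) ht
  have a4 : ∑ e ∈ Sᶜ, x e * (1 - h e) = ∑ e ∈ Sᶜ, x e - ∑ e ∈ Sᶜ, x e * h e := by
    simp [mul_sub]
  linarith

lemma diag_mono {A B : Matrix ι ι ℂ} (h : A ≤ B) (a : ι) : (A a a).re ≤ (B a a).re := by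
  rw [Matrix.le_iff] at h
  have := h.diag_nonneg (i := a)
  rw [Matrix.sub_apply, sub_nonneg] at this
  exact (Complex.le_def.1 this).1

lemma supp {P X : Matrix ι ι ℂ} (hP : Pᴴ = P) (hPP : P * P = P) (hX : X.PosSemidef)
    (hPX : P * X = X) : ∃ (V : Matrix ι ι ℂ) (x : ι → ℝ), (∀ a, 0 ≤ x a) ∧ P * V = V ∧
      Vᴴ * V = diagonal (fun a => if x a = 0 then 0 else 1) ∧
      X = V * diagonal (fun a => (x a : ℂ)) * Vᴴ ∧ V * Vᴴ ≤ P := by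
  obtain ⟨U, x, hU, hU', hXe, hx, -⟩ := spec hX.1
  have hx := hx hX
  set E : Matrix ι ι ℂ := diagonal (fun a => if x a = 0 then 0 else 1) with hE
  have hEH : Eᴴ = E := by
    rw [hE, diagonal_conjTranspose]; congr 1; ext a; simp
  have hEE : E * E = E := by
    rw [hE, diagonal_mul_diagonal]; congr 1; ext a; split_ifs <;> simp
  have hEx : E * diagonal (fun a => (x a : ℂ)) * E = diagonal (fun a => (x a : ℂ)) := by
    rw [hE, diagonal_mul_diagonal, diagonal_mul_diagonal]; congr 1; ext a
    split_ifs with h <;> simp [h]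
  have hPV : P * (U * E) = U * E := by
    have : U * E = X * U * diagonal (fun a => ((x a)⁻¹ : ℂ)) := by
      rw [hXe, Matrix.mul_assoc _ Uᴴ U, hU, Matrix.mul_one, Matrix.mul_assoc,
        diagonal_mul_diagonal]
      rw [hE]; congr 2; ext a; split_ifs with h <;> simp [h]
    rw [this, ← Matrix.mul_assoc, ← Matrix.mul_assoc, hPX]
  refine ⟨U * E, x, hx, hPV, ?_, ?_, ?_⟩
  · rw [conjTranspose_mul, hEH, Matrix.mul_assoc, ← Matrix.mul_assoc Uᴴ, hU, Matrix.one_mul, hEE]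
  · rw [conjTranspose_mul, hEH]
    conv_lhs => rw [hXe, ← hEx]
    simp only [Matrix.mul_assoc]
  · set V := U * E
    have hN : (V * Vᴴ) * (V * Vᴴ) = V * Vᴴ := by
      have h1 : Vᴴ * V = E := by
        rw [conjTranspose_mul, hEH, Matrix.mul_assoc, ← Matrix.mul_assoc Uᴴ, hU, Matrix.one_mul,
          hEE]
      have h2 : V * E = V := by rw [Matrix.mul_assoc, hEE]
      calc _ = V * (Vᴴ * V) * Vᴴ := by simp only [Matrix.mul_assoc]
        _ = _ := by rw [h1, h2]
    have hPN : P * (V * Vᴴ) = V * Vᴴ := by rw [← Matrix.mul_assoc, hPV]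
    have hNP : (V * Vᴴ) * P = V * Vᴴ := by
      have := congrArg conjTranspose hPN
      simpa [hP, Matrix.mul_assoc] using this
    rw [Matrix.le_iff]
    have := posSemidef_conjTranspose_mul_self (P - V * Vᴴ)
    have e : (P - V * Vᴴ)ᴴ * (P - V * Vᴴ) = P - V * Vᴴ := by
      rw [conjTranspose_sub, conjTranspose_mul, conjTranspose_conjTranspose, hP, Matrix.sub_mul,
        Matrix.mul_sub, Matrix.mul_sub, hPP, hPN, hNP, hN]
      abel
    rwa [e] at this

lemma core {k n : ℕ} (hk : 0 < k) (P X : Fin k → Matrix (Fin n) (Fin n) ℂ)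
    (hP : ∀ i, (P i)ᴴ = P i) (hPP : ∀ i, P i * P i = P i) (hX : ∀ i, (X i).PosSemidef)
    (hPX : ∀ i, P i * X i = X i) (γ : ℝ)
    (hγ : ∀ i, P i * (∑ j ∈ univ.erase i, P j) * P i ≤ γ • (1 : Matrix (Fin n) (Fin n) ℂ)) :
    ∃ Pr : Fin k → Matrix (Fin n) (Fin n) ℂ,
        (∀ i, (Pr i).IsHermitian) ∧ (∀ i, Pr i * Pr i = Pr i) ∧
        (∀ i j, i ≠ j → Pr i * Pr j = 0) ∧
        ∑ i : Fin k, ((1 - Pr i) * X i).trace.re ≤ 2 * γ * ∑ i, (X i).trace.re := by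
  choose V x hx hPV hVV hXV hVP using fun i => supp (hP i) (hPP i) (hX i) (hPX i)
  let R : Matrix (Fin n) (Fin k × Fin n) ℂ := Matrix.of fun r e => V e.1 r e.2
  have hG : ∀ e e', (Rᴴ * R) e e' = ((V e.1)ᴴ * V e'.1) e.2 e'.2 := fun e e' => rfl
  have key : ∀ e : Fin k × Fin n, x e.1 e.2 ≠ 0 →
      ∑ e', ‖(Rᴴ * R - 1 : Matrix (Fin k × Fin n) (Fin k × Fin n) ℂ) e e'‖ ^ 2 ≤ γ := by
    rintro ⟨i, a⟩ hxa
    simp only at hxa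
    rw [Fintype.sum_prod_type, ← add_sum_erase _ _ (mem_univ i)]
    have z : ∑ b, ‖(Rᴴ * R - 1 : Matrix (Fin k × Fin n) (Fin k × Fin n) ℂ) (i, a) (i, b)‖ ^ 2
        = 0 := by
      refine sum_eq_zero fun b _ => ?_
      rw [Matrix.sub_apply, hG, hVV, diagonal_apply, one_apply]
      by_cases h : a = b <;> simp [h]
      subst h; simp [hxa]
    rw [z, zero_add]
    calc _ ≤ ∑ j ∈ univ.erase i, (((V i)ᴴ * P j * V i) a a).re := by
          refine sum_le_sum fun j hj => ?_
          have hji : j ≠ i := ne_of_mem_erase hj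
          have h1 := diag_mono (conj_le (hVP j) (V i)) a
          refine le_trans (le_of_eq ?_) h1
          have h2 := diag_entry ((V i)ᴴ * V j) (fun _ => 1) a
          have h3 : (V i)ᴴ * V j * diagonal (fun _ => ((1 : ℝ) : ℂ)) * ((V i)ᴴ * V j)ᴴ =
              (V i)ᴴ * (V j * (V j)ᴴ) * V i := by
            simp [Matrix.mul_assoc]
          rw [← h3, h2, Complex.ofReal_re]
          refine sum_congr rfl fun b _ => ?_
          rw [Matrix.sub_apply, hG, one_apply]
          simp [Ne.symm hji]
      _ = (((V i)ᴴ * (P i * (∑ j ∈ univ.erase i, P j) * P i) * V i) a a).re := by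
          have hVPi : (V i)ᴴ * P i = (V i)ᴴ := by
            have := congrArg conjTranspose (hPV i)
            simpa [hP] using this
          have : (V i)ᴴ * (P i * (∑ j ∈ univ.erase i, P j) * P i) * V i =
              ((V i)ᴴ * P i) * (∑ j ∈ univ.erase i, P j) * (P i * V i) := by
            simp only [Matrix.mul_assoc]
          rw [this, hVPi, hPV, Matrix.mul_sum, Matrix.sum_mul, Matrix.sum_apply, Complex.re_sum]
      _ ≤ _ := by
          have := diag_mono (conj_le (hγ i) (V i)) a
          refine this.trans (le_of_eq ?_)
          rw [Matrix.mul_smul, Matrix.mul_one, Matrix.smul_mul, hVV]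
          simp [hxa]
  obtain ⟨h, h0, h1, hs, hg⟩ := hfun R
  rw [Fintype.card_fin] at hs
  obtain ⟨S, hS, hSx⟩ := select (fun e : Fin k × Fin n => x e.1 e.2) h n (fun e => hx _ _) h0 h1 hs
    (by simp; exact Nat.le_mul_of_pos_left n hk)
  let f : Fin n ≃ S := (S.equivFinOfCardEq hS).symm
  let RS : Matrix (Fin n) (Fin n) ℂ := R.submatrix id (fun s => (f s : Fin k × Fin n))
  obtain ⟨W, hW, hWe⟩ := polar RS
  have hkey : ∀ s : Fin n, x (f s).1.1 (f s).1.2 ≠ 0 → (((RS - W)ᴴ * (RS - W)) s s).re ≤ γ := by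
    intro s hs
    refine (hWe s).trans (le_trans ?_ (key (f s).1 hs))
    have : ∀ s', (RSᴴ * RS - 1 : Matrix (Fin n) (Fin n) ℂ) s s' =
        (Rᴴ * R - 1 : Matrix (Fin k × Fin n) (Fin k × Fin n) ℂ) (f s).1 (f s').1 := by
      intro s'
      rw [Matrix.sub_apply, Matrix.sub_apply, one_apply, one_apply]
      congr 1
      simp
    simp only [this]
    rw [f.sum_comp (fun e' : S => ‖(Rᴴ * R - 1 : Matrix (Fin k × Fin n) (Fin k × Fin n) ℂ)
      (f s).1 e'.1‖ ^ 2), sum_coe_sort S (fun e' => ‖(Rᴴ * R - 1 : Matrix (Fin k × Fin n)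
      (Fin k × Fin n) ℂ) (f s).1 e'‖ ^ 2)]
    exact sum_le_sum_of_subset_of_nonneg (subset_univ _) fun _ _ _ => by positivity
  let Dg : Fin k → Matrix (Fin n) (Fin n) ℂ := fun i =>
    diagonal (fun s => if (f s).1.1 = i then 1 else 0)
  let Pr : Fin k → Matrix (Fin n) (Fin n) ℂ := fun i => W * Dg i * Wᴴ
  have hDH : ∀ i, (Dg i)ᴴ = Dg i := by
    intro i
    simp only [Dg, diagonal_conjTranspose]; congr 1; ext a; simp
  have hPH : ∀ i, (Pr i)ᴴ = Pr i := by
    intro i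
    simp only [Pr, conjTranspose_mul, conjTranspose_conjTranspose, hDH, Matrix.mul_assoc]
  have hmul : ∀ i j, Pr i * Pr j = W * (Dg i * Dg j) * Wᴴ := by
    intro i j
    calc _ = W * Dg i * (Wᴴ * W) * Dg j * Wᴴ := by simp only [Pr, Matrix.mul_assoc]
      _ = _ := by rw [hW]; simp only [Matrix.mul_assoc, Matrix.one_mul]
  have hidem : ∀ i, Pr i * Pr i = Pr i := by
    intro i
    rw [hmul]
    simp only [Pr, Dg, diagonal_mul_diagonal]
    congr 3; ext a; split_ifs <;> simp
  have hPr0 : ∀ i, 0 ≤ Pr i := by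
    intro i
    rw [Matrix.nonneg_iff_posSemidef, ← hidem i]
    nth_rw 1 [← hPH i]
    exact posSemidef_conjTranspose_mul_self _
  have hPr1 : ∀ i, 1 - Pr i ≤ 1 := fun i => sub_le_self _ (hPr0 i)
  refine ⟨Pr, hPH, hidem, ?_, ?_⟩
  · intro i j hij
    rw [hmul]
    have : Dg i * Dg j = 0 := by
      simp only [Dg, diagonal_mul_diagonal]
      rw [← diagonal_zero]
      congr 1; ext a
      by_cases h : (f a).1.1 = i
      · simp [h, hij]
      · simp [h]
    simp [this]
  · let q : Fin k × Fin n → ℝ := fun e => (((V e.1)ᴴ * (1 - Pr e.1) * V e.1) e.2 e.2).re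
    have trX : ∀ i (M : Matrix (Fin n) (Fin n) ℂ), (M * X i).trace.re =
        ∑ a, x i a * (((V i)ᴴ * M * V i) a a).re := by
      intro i M
      have : (M * X i).trace = (((V i)ᴴ * M * V i) * diagonal (fun a => (x i a : ℂ))).trace := by
        conv_lhs => rw [hXV i, ← Matrix.mul_assoc, Matrix.trace_mul_comm]
        simp only [Matrix.mul_assoc]
      rw [this, trace, Complex.re_sum]
      refine sum_congr rfl fun a _ => ?_
      rw [diag_apply, mul_diagonal, mul_comm, Complex.re_ofReal_mul]
    have hT : ∑ i, (X i).trace.re = ∑ e : Fin k × Fin n, x e.1 e.2 := by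
      rw [Fintype.sum_prod_type]
      refine sum_congr rfl fun i _ => ?_
      have := trX i 1
      rw [Matrix.one_mul, Matrix.mul_one, hVV] at this
      rw [this]
      refine sum_congr rfl fun a _ => ?_
      by_cases h : x i a = 0 <;> simp [h]
    have hL : ∑ i : Fin k, ((1 - Pr i) * X i).trace.re =
        ∑ e : Fin k × Fin n, x e.1 e.2 * q e := by
      rw [Fintype.sum_prod_type]
      exact sum_congr rfl fun i _ => trX i _
    have hq1 : ∀ e, q e ≤ 1 := by
      intro e
      have := diag_mono (conj_le (hPr1 e.1) (V e.1)) e.2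
      refine this.trans ?_
      rw [Matrix.mul_one, hVV, diagonal_apply_eq]
      split_ifs <;> simp
    have hqS : ∀ e ∈ S, x e.1 e.2 ≠ 0 → q e ≤ γ := by
      intro e he hxe
      obtain ⟨s, hs⟩ := f.surjective ⟨e, he⟩
      have hs' : (f s).1 = e := by rw [hs]
      have h2 := hkey s (by rwa [hs'])
      refine le_trans ?_ h2
      have h3 := diag_mono (conj_le (hPr1 e.1) (RS - W)) s
      rw [Matrix.mul_one] at h3
      refine le_trans (le_of_eq ?_) h3
      have hcol : ∀ r, ((1 - Pr e.1) * W) r s = 0 := by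
        intro r
        have : (1 - Pr e.1) * W = W - W * Dg e.1 := by
          simp only [Pr]
          rw [Matrix.sub_mul, Matrix.one_mul, Matrix.mul_assoc _ Wᴴ W, hW, Matrix.mul_one]
        rw [this, Matrix.sub_apply]
        simp only [Dg]
        rw [mul_diagonal, hs']
        simp
      have hrow : ∀ r, (Wᴴ * (1 - Pr e.1)) s r = 0 := by
        intro r
        have h4 : Wᴴ * (1 - Pr e.1) = ((1 - Pr e.1) * W)ᴴ := by
          rw [conjTranspose_mul, conjTranspose_sub, conjTranspose_one, hPH]
        rw [h4, conjTranspose_apply, hcol, star_zero]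
      have e1 : ((RS - W)ᴴ * (1 - Pr e.1) * (RS - W)) s s = (RSᴴ * (1 - Pr e.1) * RS) s s := by
        have e2 : (RS - W)ᴴ * (1 - Pr e.1) * (RS - W) = RSᴴ * (1 - Pr e.1) * RS
            - (Wᴴ * (1 - Pr e.1)) * RS - RSᴴ * ((1 - Pr e.1) * W)
            + (Wᴴ * (1 - Pr e.1)) * W := by
          rw [conjTranspose_sub]
          simp only [Matrix.mul_assoc, Matrix.sub_mul, Matrix.mul_sub, Matrix.one_mul,
            Matrix.mul_one]
          abel
        rw [e2, Matrix.add_apply, Matrix.sub_apply, Matrix.sub_apply,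
          Matrix.mul_apply (M := Wᴴ * (1 - Pr e.1)), Matrix.mul_apply (M := RSᴴ),
          Matrix.mul_apply (M := Wᴴ * (1 - Pr e.1))]
        simp only [hcol, hrow]
        simp
      rw [e1]
      simp only [q]
      congr 1
      simp only [Matrix.mul_apply, conjTranspose_apply, RS, R, submatrix_apply, of_apply, id, hs']
    rw [hL, hT, ← sum_add_sum_compl S (fun e => x e.1 e.2 * q e)]
    have b1 : ∑ e ∈ S, x e.1 e.2 * q e ≤ γ * ∑ e : Fin k × Fin n, x e.1 e.2 := by
      have hxγ : ∀ e : Fin k × Fin n, 0 ≤ γ * x e.1 e.2 := by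
        intro e
        by_cases hz : x e.1 e.2 = 0
        · simp [hz]
        · have : 0 ≤ γ := le_trans (sum_nonneg fun _ _ => by positivity) (key e hz)
          exact mul_nonneg this (hx _ _)
      rw [mul_sum]
      refine le_trans (sum_le_sum (g := fun e => γ * x e.1 e.2) fun e he => ?_)
        (sum_le_sum_of_subset_of_nonneg (subset_univ _) fun e _ _ => hxγ e)
      by_cases hz : x e.1 e.2 = 0
      · simp [hz]
      · rw [mul_comm]; exact mul_le_mul_of_nonneg_right (hqS e he hz) (hx _ _)
    have b2 : ∑ e ∈ Sᶜ, x e.1 e.2 * q e ≤ ∑ e ∈ Sᶜ, x e.1 e.2 :=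
      sum_le_sum fun e _ => mul_le_of_le_one_right (hx _ _) (hq1 e)
    have b3 : ∑ e : Fin k × Fin n, x e.1 e.2 * (1 - h e) ≤
        γ * ∑ e : Fin k × Fin n, x e.1 e.2 := by
      rw [mul_sum]
      refine sum_le_sum fun e _ => ?_
      by_cases hz : x e.1 e.2 = 0
      · simp [hz]
      · rw [mul_comm]
        exact mul_le_mul_of_nonneg_right ((hg e).trans (key e hz)) (hx _ _)
    linarith

lemma proj_nonneg {Q : Matrix ι ι ℂ} (hQ : Qᴴ = Q) (hQQ : Q * Q = Q) : 0 ≤ Q := by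
  rw [Matrix.nonneg_iff_posSemidef, ← hQQ]
  nth_rw 1 [← hQ]
  exact posSemidef_conjTranspose_mul_self _

lemma gram_nonneg (A : Matrix ι κ ℂ) : 0 ≤ A * Aᴴ :=
  Matrix.nonneg_iff_posSemidef.2 (posSemidef_self_mul_conjTranspose A)

/-- single-operator preparation step -/
lemma prep {Y : Matrix ι κ ℂ} {C : Matrix ι ι ℂ} (hC : 0 ≤ C) (hY : Yᴴ * Y ≤ 1)
    {β δ : ℝ} (hβ : 0 < β) (hδ : 0 < δ) :
    ∃ (P : Matrix ι ι ℂ) (Q : Matrix κ κ ℂ), Pᴴ = P ∧ P * P = P ∧ Qᴴ = Q ∧ Q * Q = Q ∧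
      δ • P ≤ Y * Yᴴ ∧ P * C * P ≤ (β / δ) • (1 : Matrix ι ι ℂ) ∧
      ∀ (M : Matrix ι ι ℂ) (r : Matrix κ κ ℂ), 0 ≤ M → M ≤ 1 → r.PosSemidef →
        (Yᴴ * M * Y * r).trace.re ≤ 2 / β * (Yᴴ * C * Y * r).trace.re + 4 * δ * r.trace.re
          + 4 * (M * ((P * Y * Q) * r * (P * Y * Q)ᴴ)).trace.re ∧
        ((P * Y * Q) * r * (P * Y * Q)ᴴ).trace.re ≤ r.trace.re := by
  have hD : 0 ≤ Yᴴ * C * Y := by simpa using conj_le hC Y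
  obtain ⟨Q, hQ, hQQ, hQ1, hQ2⟩ := cut hD hβ
  obtain ⟨Q2, hR, hRR, hR1, hR2⟩ := cut (gram_nonneg (Y * Q)) hδ
  have hQle : Q ≤ 1 := by
    have : 0 ≤ 1 - Q := proj_nonneg (by simp [hQ]) (by
      simp [Matrix.mul_sub, Matrix.sub_mul, hQQ])
    exact sub_nonneg.1 this
  have hYQ : (Y * Q) * (Y * Q)ᴴ ≤ Y * Yᴴ := by
    have := conj_le' hQle Y
    rw [Matrix.mul_one] at this
    refine le_trans (le_of_eq ?_) this
    rw [conjTranspose_mul, hQ, Matrix.mul_assoc, ← Matrix.mul_assoc Q, hQQ, Matrix.mul_assoc]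
  have hPH : (1 - Q2)ᴴ = 1 - Q2 := by simp [hR]
  have hPP : (1 - Q2) * (1 - Q2) = 1 - Q2 := by simp [Matrix.mul_sub, Matrix.sub_mul, hRR]
  have hPle : 1 - Q2 ≤ 1 := sub_le_self _ (proj_nonneg hR hRR)
  refine ⟨1 - Q2, Q, hPH, hPP, hQ, hQQ, hR2.trans hYQ, ?_, ?_⟩
  · obtain ⟨N, rfl⟩ : ∃ N : Matrix ι ι ℂ, C = Nᴴ * N :=
      CStarAlgebra.nonneg_iff_eq_star_mul_self.1 hC
    have h1 : (N * Y * Q)ᴴ * (N * Y * Q) ≤ β • (1 : Matrix κ κ ℂ) := by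
      refine le_trans (le_of_eq ?_) hQ1
      simp only [conjTranspose_mul, hQ, Matrix.mul_assoc]
    have h2 := flip hβ h1
    have h3 := smul_le (inv_nonneg.2 hδ.le) ((conj_le' hR2 N).trans (le_trans (le_of_eq (by
      simp only [conjTranspose_mul, Matrix.mul_assoc])) h2))
    have h4 : ((N * (1 - Q2))ᴴ)ᴴ * (N * (1 - Q2))ᴴ ≤ (β / δ) • (1 : Matrix ι ι ℂ) := by
      refine le_trans (le_of_eq ?_) (h3.trans (le_of_eq ?_))
      · rw [Matrix.mul_smul, Matrix.smul_mul, smul_smul, inv_mul_cancel₀ hδ.ne', one_smul,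
          conjTranspose_conjTranspose, conjTranspose_mul, hPH, Matrix.mul_assoc,
          ← Matrix.mul_assoc (1 - Q2), hPP, Matrix.mul_assoc]
      · rw [smul_smul]; congr 1; field_simp
    have h5 := flip (by positivity) h4
    refine le_trans (le_of_eq ?_) h5
    rw [conjTranspose_conjTranspose, conjTranspose_mul, hPH]
    simp only [Matrix.mul_assoc]
  · intro M r hM0 hM1 hr
    set P := 1 - Q2 with hPdef
    have contr : ∀ (Z : Matrix ι κ ℂ), Zᴴ * M * Z ≤ Zᴴ * Z := by
      intro Z
      simpa using conj_le hM1 Z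
    have hYQ1 : (Y * Q)ᴴ * (Y * Q) ≤ 1 := by
      have := conj_le hY Q
      rw [Matrix.mul_one, hQ, hQQ] at this
      refine le_trans (le_of_eq ?_) (this.trans hQle)
      simp only [conjTranspose_mul, hQ, Matrix.mul_assoc]
    have s1 := tr_split (Y * (1 - Q)) (Y * Q) hM0 hr
    have s2 := tr_split (P * Y * Q) (Q2 * Y * Q) hM0 hr
    have e1 : Y * (1 - Q) + Y * Q = Y := by simp [Matrix.mul_sub]
    have e2 : P * Y * Q + Q2 * Y * Q = Y * Q := by
      simp [hPdef, Matrix.sub_mul]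
    rw [e1] at s1
    rw [e2] at s2
    have t1 : ((Y * (1 - Q))ᴴ * M * (Y * (1 - Q)) * r).trace.re ≤
        1 / β * (Yᴴ * C * Y * r).trace.re := by
      have h1 : (Y * (1 - Q))ᴴ * M * (Y * (1 - Q)) ≤ (1 / β) • (Yᴴ * C * Y) := by
        refine (contr _).trans ?_
        have h2 := conj_le hY (1 - Q)
        have hQ' : (1 - Q)ᴴ = 1 - Q := by simp [hQ]
        have hQQ' : (1 - Q) * (1 - Q) = 1 - Q := by simp [Matrix.mul_sub, Matrix.sub_mul, hQQ]
        rw [Matrix.mul_one, hQ', hQQ'] at h2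
        have h3 := smul_le (inv_nonneg.2 hβ.le) hQ2
        rw [smul_smul, inv_mul_cancel₀ hβ.ne', one_smul] at h3
        rw [one_div]
        refine le_trans (le_of_eq ?_) (h2.trans h3)
        rw [conjTranspose_mul, hQ']
        simp only [Matrix.mul_assoc]
      refine (tr_mono h1 hr).trans (le_of_eq ?_)
      simp [Matrix.smul_mul, trace_smul]
    have t2 : ((Q2 * Y * Q)ᴴ * M * (Q2 * Y * Q) * r).trace.re ≤ δ * r.trace.re := by
      have h1 : (Q2 * Y * Q)ᴴ * M * (Q2 * Y * Q) ≤ δ • (1 : Matrix κ κ ℂ) := by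
        refine (contr _).trans ?_
        have h2 : ((Q2 * Y * Q)ᴴ)ᴴ * (Q2 * Y * Q)ᴴ ≤ δ • (1 : Matrix ι ι ℂ) := by
          refine le_trans (le_of_eq ?_) hR1
          simp only [conjTranspose_conjTranspose, conjTranspose_mul, hR, Matrix.mul_assoc]
        simpa using flip hδ h2
      refine (tr_mono h1 hr).trans (le_of_eq ?_)
      simp [Matrix.smul_mul, trace_smul]
    have t3 : ((P * Y * Q)ᴴ * M * (P * Y * Q) * r).trace =
        (M * ((P * Y * Q) * r * (P * Y * Q)ᴴ)).trace := by
      rw [Matrix.mul_assoc, Matrix.mul_assoc, Matrix.trace_mul_comm]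
      simp only [Matrix.mul_assoc]
    refine ⟨?_, ?_⟩
    · rw [t3] at s2
      have : 2 / β * (Yᴴ * C * Y * r).trace.re = 2 * (1 / β * (Yᴴ * C * Y * r).trace.re) := by ring
      rw [this]
      linarith
    · have h1 : (P * Y * Q)ᴴ * (P * Y * Q) ≤ 1 := by
        have := conj_le hPle (Y * Q)
        rw [Matrix.mul_one] at this
        refine le_trans (le_of_eq ?_) (this.trans hYQ1)
        calc _ = (Y * Q)ᴴ * (P * P) * (Y * Q) := by
              simp only [conjTranspose_mul, hPH, Matrix.mul_assoc]
          _ = _ := by rw [hPP]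
      have h2 := tr_mono h1 hr
      rw [Matrix.one_mul] at h2
      refine le_trans (le_of_eq ?_) h2
      rw [Matrix.trace_mul_comm, ← Matrix.mul_assoc]

lemma main (k m n : ℕ) (hk : 0 < k)
    (ρi : Fin k → Matrix (Fin m) (Fin m) ℂ) (ρ : Matrix (Fin m) (Fin m) ℂ)
    (Y : Fin k → Matrix (Fin n) (Fin m) ℂ) (α : ℝ)
    (hρi : ∀ i, (ρi i).PosSemidef)
    (hle : (ρ - ∑ i, ρi i).PosSemidef)
    (hY : (1 - ∑ i, Y i * (Y i)ᴴ).PosSemidef) (hα : 0 < α)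
    (hyp : ∑ i : Fin k, ∑ j ∈ univ.erase i,
          ((Y i)ᴴ * (Y j * (Y j)ᴴ) * Y i * ρi i).trace.re ≤ α * ρ.trace.re) :
    ∃ Pr : Fin k → Matrix (Fin n) (Fin n) ℂ,
        (∀ i, (Pr i).IsHermitian) ∧ (∀ i, Pr i * Pr i = Pr i) ∧
        (∀ i j, i ≠ j → Pr i * Pr j = 0) ∧
        ∑ i : Fin k, ((Y i)ᴴ * (1 - Pr i) * Y i * ρi i).trace.re ≤
          14 * α ^ (1 / 4 : ℝ) * ρ.trace.re := by
  set δ : ℝ := α ^ (1 / 4 : ℝ) with hδdef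
  have hδ : 0 < δ := Real.rpow_pos_of_pos hα _
  have hα4 : α = δ ^ 4 := by
    rw [hδdef, ← Real.rpow_natCast, ← Real.rpow_mul hα.le]; norm_num
  have hβ : 0 < δ ^ 3 := by positivity
  let C : Fin k → Matrix (Fin n) (Fin n) ℂ := fun i => ∑ j ∈ univ.erase i, Y j * (Y j)ᴴ
  have hC : ∀ i, 0 ≤ C i := fun i => sum_nonneg fun j _ => gram_nonneg _
  have hYY : ∀ i, (Y i)ᴴ * Y i ≤ 1 := by
    intro i
    have h1 : Y i * (Y i)ᴴ ≤ ∑ i, Y i * (Y i)ᴴ :=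
      single_le_sum (f := fun i => Y i * (Y i)ᴴ) (fun j _ => gram_nonneg _) (mem_univ i)
    have h2 : ((Y i)ᴴ)ᴴ * (Y i)ᴴ ≤ (1 : ℝ) • (1 : Matrix (Fin n) (Fin n) ℂ) := by
      rw [one_smul, conjTranspose_conjTranspose]
      exact h1.trans (Matrix.le_iff.2 hY)
    simpa using flip one_pos h2
  choose P Q hPH hPP hQ hQQ hPY hPC hfin using fun i => prep (hC i) (hYY i) hβ hδ
  let X : Fin k → Matrix (Fin n) (Fin n) ℂ := fun i =>
    (P i * Y i * Q i) * ρi i * (P i * Y i * Q i)ᴴ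
  obtain ⟨Pr, h1, h2, h3, h4⟩ := core hk P X hPH hPP
    (fun i => (hρi i).mul_mul_conjTranspose_same _)
    (fun i => by simp only [X, ← Matrix.mul_assoc, hPP]) δ (by
      intro i
      have g1 : δ • ∑ j ∈ univ.erase i, P j ≤ C i := by
        rw [smul_sum]; exact sum_le_sum fun j _ => hPY j
      have g2 := conj_le g1 (P i)
      rw [hPH] at g2
      have g3 := smul_le (inv_nonneg.2 hδ.le) (g2.trans (hPC i))
      rw [Matrix.mul_smul, Matrix.smul_mul, smul_smul, inv_mul_cancel₀ hδ.ne', one_smul,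
        smul_smul] at g3
      refine g3.trans (le_of_eq ?_)
      congr 1; field_simp)
  refine ⟨Pr, h1, h2, h3, ?_⟩
  have hM0 : ∀ i, 0 ≤ 1 - Pr i := fun i => proj_nonneg
    (by rw [conjTranspose_sub, conjTranspose_one, (h1 i).eq])
    (by simp [Matrix.mul_sub, Matrix.sub_mul, h2])
  have hM1 : ∀ i, 1 - Pr i ≤ 1 := fun i => sub_le_self _ (proj_nonneg (h1 i) (h2 i))
  have F := fun i => hfin i (1 - Pr i) (ρi i) (hM0 i) (hM1 i) (hρi i)
  have S1 := sum_le_sum fun i (_ : i ∈ univ) => (F i).1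
  have S2 : ∑ i, (X i).trace.re ≤ ∑ i, (ρi i).trace.re := sum_le_sum fun i _ => (F i).2
  rw [sum_add_distrib, sum_add_distrib, ← mul_sum, ← mul_sum, ← mul_sum] at S1
  have S3 : ∑ i, (ρi i).trace.re ≤ ρ.trace.re := by
    have := (Complex.le_def.1 hle.trace_nonneg).1
    rw [trace_sub, trace_sum, Complex.sub_re, Complex.re_sum, Complex.zero_re] at this
    linarith
  have S4 : ∑ i, ((Y i)ᴴ * C i * Y i * ρi i).trace.re ≤ α * ρ.trace.re := by
    refine le_trans (le_of_eq ?_) hyp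
    refine sum_congr rfl fun i _ => ?_
    simp only [C]
    rw [Matrix.mul_sum, Matrix.sum_mul, Matrix.sum_mul, trace_sum, Complex.re_sum]
  have S5 : 2 / δ ^ 3 * ∑ i, ((Y i)ᴴ * C i * Y i * ρi i).trace.re ≤ 2 * δ * ρ.trace.re := by
    refine (mul_le_mul_of_nonneg_left S4 (by positivity)).trans (le_of_eq ?_)
    rw [hα4]; field_simp
  have S6 : 4 * δ * ∑ i, (ρi i).trace.re ≤ 4 * δ * ρ.trace.re :=
    mul_le_mul_of_nonneg_left S3 (by positivity)
  have S7 : 2 * δ * ∑ i, (X i).trace.re ≤ 2 * δ * ρ.trace.re :=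
    mul_le_mul_of_nonneg_left (S2.trans S3) (by positivity)
  have S8 : ∑ i, ((1 - Pr i) * (P i * Y i * Q i * ρi i * (P i * Y i * Q i)ᴴ)).trace.re ≤
      2 * δ * ∑ i, (X i).trace.re := h4
  linarith

lemma tr_nonneg_conj (Y : Matrix ι κ ℂ) {p : Matrix ι ι ℂ} (hp : pᴴ = p) (hpp : p * p = p)
    {r : Matrix κ κ ℂ} (hr : r.PosSemidef) : 0 ≤ (Yᴴ * (1 - p) * Y * r).trace := by
  refine tr_nonneg ?_ hr
  have : 0 ≤ 1 - p := proj_nonneg (by simp [hp]) (by simp [Matrix.mul_sub, Matrix.sub_mul, hpp])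
  simpa using conj_le this Y
end
end OrthLem

/-- Lemma 5.3 (Orthogonalization Lemma): operators `Ŷ i` that are pairwise almost
orthogonal relative to the states `ρi i` are close to admitting a joint block-diagonal
decomposition given by pairwise orthogonal projectors `Pr i`. -/
theorem orthogonalization_lemma :
    ∃ c K : ℝ, 0 < c ∧ 0 < K ∧
      ∀ (k m n : ℕ), 0 < k → 0 < m → 0 < n →
      ∀ (ρi : Fin k → Matrix (Fin m) (Fin m) ℂ) (ρ : Matrix (Fin m) (Fin m) ℂ)
        (Y : Fin k → Matrix (Fin n) (Fin m) ℂ) (α : ℝ),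
      (∀ i, (ρi i).PosSemidef) → ρ.PosSemidef →
      (ρ - ∑ i, ρi i).PosSemidef →
      (1 - ∑ i, Y i * (Y i)ᴴ).PosSemidef →
      0 < α →
      (∑ i : Fin k, ∑ j ∈ univ.erase i,
          ((Y i)ᴴ * (Y j * (Y j)ᴴ) * Y i * ρi i).trace ≤ ((α * ρ.trace.re : ℝ) : ℂ)) →
      ∃ Pr : Fin k → Matrix (Fin n) (Fin n) ℂ,
        (∀ i, (Pr i).IsHermitian) ∧ (∀ i, Pr i * Pr i = Pr i) ∧
        (∀ i j, i ≠ j → Pr i * Pr j = 0) ∧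
        ∑ i : Fin k, ((Y i)ᴴ * (1 - Pr i) * Y i * ρi i).trace ≤
          ((K * α ^ c * ρ.trace.re : ℝ) : ℂ) := by
  refine ⟨1 / 4, 14, by norm_num, by norm_num, ?_⟩
  intro k m n hk hm hn ρi ρ Y α hρi hρ hle hY hα hyp
  have hyp' := (Complex.le_def.1 hyp).1
  simp only [Complex.re_sum, Complex.ofReal_re] at hyp'
  obtain ⟨Pr, h1, h2, h3, h4⟩ := OrthLem.main k m n hk ρi ρ Y α hρi hle hY hα hyp'
  refine ⟨Pr, h1, h2, h3, ?_⟩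
  rw [Complex.le_def]
  refine ⟨by simpa only [Complex.re_sum, Complex.ofReal_re] using h4, ?_⟩
  rw [Complex.ofReal_im, Complex.im_sum]
  refine sum_eq_zero fun i _ => ?_
  have h0 := OrthLem.tr_nonneg_conj (Y i) (h1 i) (h2 i) (hρi i)
  exact (Complex.le_def.1 h0).2.symm
end

section
/- Let Q be a nonempty finite set, μ a probability distribution on Q, C a positive integer, and E a complex inner product space. Let f : Q^C → E, let M := E_{q∼μ^C}[f(q)], and for i ∈ {1,…,C} and q_i ∈ Q let M_{i,q_i} be the expectation of f(q) over q ∼ μ^C conditioned on coordinate i equaling q_i. Assume E_{q∼μ^C}[‖f(q)‖²] ≤ 1. Then 0 ≤ E_{(i,q_i)}[‖M − M_{i,q_i}‖²] ≤ (1/C) · E_{q∼μ^C}[‖f(q)‖²] ≤ 1/C, where E_{(i,q_i)} denotes expectation over i uniform in {1,…,C} and q_i ∼ μ. -/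
theorem aux_resample {Q : Type*} [Fintype Q] [DecidableEq Q] (w : Q → ℝ) (hw1 : ∑ q, w q = 1)
    {C : ℕ} {F : Type*} [AddCommGroup F] [Module ℝ F] (i : Fin C) (h : (Fin C → Q) → F) :
    ∑ q : Fin C → Q, (∏ j, w (q j)) • h q =
      ∑ a, w a • ∑ q : Fin C → Q, (∏ j, w (q j)) • h (Function.update q i a) := by
  have hP : ∀ (q : Fin C → Q) (a : Q),
      w (q i) * ∏ j, w (Function.update q i a j) = w a * ∏ j, w (q j) := by
    intro q a
    rw [← Finset.mul_prod_erase Finset.univ (fun j => w (Function.update q i a j))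
      (Finset.mem_univ i), ← Finset.mul_prod_erase Finset.univ (fun j => w (q j))
      (Finset.mem_univ i)]
    have : ∏ j ∈ Finset.univ.erase i, w (Function.update q i a j)
        = ∏ j ∈ Finset.univ.erase i, w (q j) := by
      apply Finset.prod_congr rfl
      intro j hj
      rw [Function.update_of_ne (Finset.ne_of_mem_erase hj)]
    simp only [this, Function.update_self]
    ring
  have hinv : Function.Involutive
      (fun x : Q × (Fin C → Q) => (x.2 i, Function.update x.2 i x.1)) := by
    rintro ⟨a, q⟩
    simp
  have h1 : ∑ q : Fin C → Q, (∏ j, w (q j)) • h q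
      = ∑ x : Q × (Fin C → Q), (w x.1 * ∏ j, w (x.2 j)) • h x.2 := by
    rw [Fintype.sum_prod_type_right]
    refine Finset.sum_congr rfl fun q _ => ?_
    simp only
    rw [← Finset.sum_smul, ← Finset.sum_mul, hw1, one_mul]
  rw [h1, ← Equiv.sum_comp hinv.toPerm]
  simp only [Finset.smul_sum, smul_smul]
  rw [Fintype.sum_prod_type]
  refine Finset.sum_congr rfl fun a _ => Finset.sum_congr rfl fun q _ => ?_
  simp only [Function.Involutive.coe_toPerm]
  rw [hP]

theorem aux_main {Q : Type*} [Fintype Q] [DecidableEq Q]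
    (w : Q → ℝ) (hw : ∀ q, 0 ≤ w q) (hw1 : ∑ q, w q = 1) (C : ℕ)
    {E : Type*} [NormedAddCommGroup E] [InnerProductSpace ℝ E]
    (f : (Fin C → Q) → E) (M : E) (hM : M = ∑ q : Fin C → Q, (∏ i, w (q i)) • f q)
    (g : Fin C → Q → E)
    (hg : ∀ i a, g i a =
      ∑ q : Fin C → Q, (∏ j, w (q j)) • f (Function.update q i a) - M) :
    ∑ i : Fin C, ∑ a : Q, w a * ‖g i a‖ ^ 2 ≤
      ∑ q : Fin C → Q, (∏ i, w (q i)) * ‖f q‖ ^ 2 := by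
  have hP1 : ∑ q : Fin C → Q, ∏ j, w (q j) = 1 := by
    rw [← Fintype.prod_sum (fun (_ : Fin C) a => w a)]
    simp [hw1]
  have hP0 : ∀ q : Fin C → Q, 0 ≤ ∏ j, w (q j) := fun q => Finset.prod_nonneg fun j _ => hw _
  have g0 : ∀ i, ∑ a, w a • g i a = 0 := by
    intro i
    simp only [hg, smul_sub]
    rw [Finset.sum_sub_distrib, ← aux_resample w hw1 i f, ← Finset.sum_smul, hw1, ← hM]
    simp
  have R : ∀ (i : Fin C) (h : (Fin C → Q) → ℝ), ∑ q : Fin C → Q, (∏ j, w (q j)) * h q =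
      ∑ a, w a * ∑ q : Fin C → Q, (∏ j, w (q j)) * h (Function.update q i a) :=
    fun i h => aux_resample w hw1 i h
  have hfg : ∀ i, ∑ q : Fin C → Q, (∏ j, w (q j)) * inner ℝ (f q) (g i (q i))
      = ∑ a, w a * ‖g i a‖ ^ 2 := by
    intro i
    rw [R i]
    have : ∀ a, ∑ q : Fin C → Q, (∏ j, w (q j)) *
        inner ℝ (f (Function.update q i a)) (g i (Function.update q i a i))
        = ‖g i a‖ ^ 2 + inner ℝ M (g i a) := by
      intro a
      have e : ∑ q : Fin C → Q, (∏ j, w (q j)) • f (Function.update q i a) = g i a + M := by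
        rw [hg]; abel
      simp only [Function.update_self, ← real_inner_smul_left]
      rw [← sum_inner, e, inner_add_left, real_inner_self_eq_norm_sq]
    simp only [this, mul_add, Finset.sum_add_distrib]
    simp only [← real_inner_smul_right]
    rw [← inner_sum, g0, inner_zero_right, add_zero]
  have hgg : ∀ i, ∑ q : Fin C → Q, (∏ j, w (q j)) * inner ℝ (g i (q i)) (g i (q i))
      = ∑ a, w a * ‖g i a‖ ^ 2 := by
    intro i
    rw [R i]
    simp only [Function.update_self, real_inner_self_eq_norm_sq, ← Finset.sum_mul, hP1, one_mul]
  have hgo : ∀ i k, k ≠ i →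
      ∑ q : Fin C → Q, (∏ j, w (q j)) * inner ℝ (g i (q i)) (g k (q k)) = 0 := by
    intro i k hk
    rw [R i]
    simp only [Function.update_self, Function.update_of_ne hk, ← real_inner_smul_right]
    simp only [← inner_sum, ← real_inner_smul_left]
    rw [← sum_inner, g0, inner_zero_left]
  have key : 0 ≤ ∑ q : Fin C → Q, (∏ j, w (q j)) * ‖f q - ∑ i, g i (q i)‖ ^ 2 :=
    Finset.sum_nonneg fun q _ => mul_nonneg (hP0 q) (sq_nonneg _)
  have c1 : ∑ q : Fin C → Q, (∏ j, w (q j)) * inner ℝ (f q) (∑ i, g i (q i))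
      = ∑ i, ∑ a, w a * ‖g i a‖ ^ 2 := by
    simp only [inner_sum, Finset.mul_sum]
    rw [Finset.sum_comm]
    exact Finset.sum_congr rfl fun i _ => hfg i
  have c2 : ∑ q : Fin C → Q, (∏ j, w (q j)) * ‖∑ i, g i (q i)‖ ^ 2
      = ∑ i, ∑ a, w a * ‖g i a‖ ^ 2 := by
    simp only [← real_inner_self_eq_norm_sq (∑ i, g i _), sum_inner, Finset.mul_sum]
    rw [Finset.sum_comm]
    refine Finset.sum_congr rfl fun i _ => ?_
    simp only [inner_sum, Finset.mul_sum]
    rw [Finset.sum_comm, Finset.sum_eq_single i]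
    · exact hgg i
    · intro k _ hk
      exact hgo i k hk
    · simp
  have ex : ∑ q : Fin C → Q, (∏ j, w (q j)) * ‖f q - ∑ i, g i (q i)‖ ^ 2
      = ∑ q : Fin C → Q, (∏ j, w (q j)) * ‖f q‖ ^ 2
        - 2 * ∑ q : Fin C → Q, (∏ j, w (q j)) * inner ℝ (f q) (∑ i, g i (q i))
        + ∑ q : Fin C → Q, (∏ j, w (q j)) * ‖∑ i, g i (q i)‖ ^ 2 := by
    rw [Finset.mul_sum, ← Finset.sum_sub_distrib, ← Finset.sum_add_distrib]
    refine Finset.sum_congr rfl fun q _ => ?_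
    rw [norm_sub_sq_real]
    ring
  rw [ex, c1, c2] at key
  linarith

/-- Part 1 of Claim A.1: for `f` with values in a complex inner product space,
`M` its mean over the product distribution `μ^C` and `M_{i,q_i}` its mean conditioned on
coordinate `i` equaling `q_i`, if `E‖f‖² ≤ 1` then
`0 ≤ E_{(i,q_i)} ‖M − M_{i,q_i}‖² ≤ (1/C)·E‖f‖² ≤ 1/C`. -/
theorem claimA1_part1 {Q : Type*} [Fintype Q] [Nonempty Q] [DecidableEq Q]
    (w : Q → ℝ) (hw : ∀ q, 0 ≤ w q) (hw1 : ∑ q, w q = 1)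
    (C : ℕ) (hC : 0 < C)
    {E : Type*} [NormedAddCommGroup E] [InnerProductSpace ℂ E]
    (f : (Fin C → Q) → E)
    (hf : ∑ q : Fin C → Q, (∏ i, w (q i)) * ‖f q‖ ^ 2 ≤ 1) :
    let M := ∑ q : Fin C → Q, (∏ i, w (q i)) • f q
    let Mi := fun (i : Fin C) (qi : Q) =>
      ∑ q : Fin C → Q, (∏ j, w (q j)) • f (Function.update q i qi)
    0 ≤ (C : ℝ)⁻¹ * ∑ i : Fin C, ∑ qi : Q, w qi * ‖M - Mi i qi‖ ^ 2 ∧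
    (C : ℝ)⁻¹ * ∑ i : Fin C, ∑ qi : Q, w qi * ‖M - Mi i qi‖ ^ 2 ≤
      (C : ℝ)⁻¹ * ∑ q : Fin C → Q, (∏ i, w (q i)) * ‖f q‖ ^ 2 ∧
    (C : ℝ)⁻¹ * ∑ q : Fin C → Q, (∏ i, w (q i)) * ‖f q‖ ^ 2 ≤ (C : ℝ)⁻¹ := by
  intro M Mi
  have hCi : (0 : ℝ) ≤ (C : ℝ)⁻¹ := inv_nonneg.2 (Nat.cast_nonneg C)
  have hM : M = ∑ q : Fin C → Q, (∏ i, w (q i)) • f q := rfl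
  have hMi : ∀ i a, Mi i a =
      ∑ q : Fin C → Q, (∏ j, w (q j)) • f (Function.update q i a) := fun _ _ => rfl
  clear_value M Mi
  letI : InnerProductSpace ℝ E := InnerProductSpace.complexToReal
  have key := aux_main w hw hw1 C f M hM (fun i a => Mi i a - M) (fun i a => by
    show Mi i a - M = _
    rw [hMi])
  have key2 : ∑ i : Fin C, ∑ qi : Q, w qi * ‖M - Mi i qi‖ ^ 2 ≤
      ∑ q : Fin C → Q, (∏ i, w (q i)) * ‖f q‖ ^ 2 := by
    simp only [norm_sub_rev M]
    exact key
  refine ⟨mul_nonneg hCi (Finset.sum_nonneg fun i _ => Finset.sum_nonneg fun a _ =>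
    mul_nonneg (hw a) (sq_nonneg _)), mul_le_mul_of_nonneg_left key2 hCi,
    mul_le_of_le_one_right hCi hf⟩
end

section
/- Let Q be a nonempty finite set, μ a probability distribution on Q, and C, n positive integers. For each q ∈ Q^C let Y_q be an n×n complex matrix with 0 ≤ Y_q ≤ I in the Loewner order. Let Y := E_{q∼μ^C}[Y_q], and for i ∈ {1,…,C} and q_i ∈ Q let Y_{i,q_i} be the expectation of Y_q over q ∼ μ^C conditioned on coordinate i equaling q_i. Then E_{(i,q_i)}[(Y − Y_{i,q_i})²] ≤ (1/C) · E_{q∼μ^C}[Y_q²] in the Loewner order, where E_{(i,q_i)} denotes expectation over i uniform in {1,…,C} and q_i ∼ μ. -/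
open Matrix

open scoped ComplexOrder


section Helpers

lemma resample {Q : Type*} [Fintype Q] [DecidableEq Q] {M : Type*} [AddCommGroup M] [Module ℝ M]
    (w : Q → ℝ) (hw1 : ∑ q, w q = 1) {C : ℕ} (i : Fin C) (F : (Fin C → Q) → M) :
    ∑ a, w a • ∑ q : Fin C → Q, (∏ j, w (q j)) • F (Function.update q i a)
      = ∑ q : Fin C → Q, (∏ j, w (q j)) • F q := by
  have h1 : ∑ q : Fin C → Q, (∏ j, w (q j)) • F q
      = ∑ x : Q × (Fin C → Q), (w x.1 * ∏ j, w (x.2 j)) • F x.2 := by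
    rw [Fintype.sum_prod_type]
    simp only [mul_smul, ← Finset.smul_sum]
    rw [← Finset.sum_smul, hw1, one_smul]
  rw [h1]
  simp only [Finset.smul_sum, smul_smul]
  rw [← Fintype.sum_prod_type (f := fun x : Q × (Fin C → Q) =>
    (w x.1 * ∏ j, w (x.2 j)) • F (Function.update x.2 i x.1))]
  have inv : Function.Involutive
      (fun x : Q × (Fin C → Q) => (x.2 i, Function.update x.2 i x.1)) := by
    intro x
    simp
  refine Fintype.sum_equiv inv.toPerm _ _ ?_
  rintro ⟨a, q⟩
  simp only [Function.Involutive.coe_toPerm]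
  congr 1
  rw [Fintype.prod_eq_mul_prod_compl i, Fintype.prod_eq_mul_prod_compl i]
  have : ∏ j ∈ ({i} : Finset (Fin C))ᶜ, w (Function.update q i a j)
      = ∏ j ∈ ({i} : Finset (Fin C))ᶜ, w (q j) := by
    refine Finset.prod_congr rfl fun j hj => ?_
    rw [Function.update_of_ne (by simpa using hj)]
  rw [this, Function.update_self]
  ring

lemma sum_weights {Q : Type*} [Fintype Q] [DecidableEq Q]
    (w : Q → ℝ) (hw1 : ∑ q, w q = 1) (C : ℕ) :
    ∑ q : Fin C → Q, (∏ j, w (q j)) = 1 := by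
  have := Finset.prod_univ_sum (fun _ : Fin C => (Finset.univ : Finset Q)) (fun _ a => w a)
  simp only [hw1, Finset.prod_const_one, Fintype.piFinset_univ] at this
  exact this.symm

lemma key {Q : Type*} [Fintype Q] [DecidableEq Q] {M : Type*} [Ring M] [Algebra ℝ M]
    (w : Q → ℝ) (hw1 : ∑ q, w q = 1) {C : ℕ} (Y : (Fin C → Q) → M)
    (D : Fin C → Q → M)
    (hD : ∀ i a, D i a = ∑ q : Fin C → Q, (∏ i, w (q i)) • Y q -
      ∑ q : Fin C → Q, (∏ j, w (q j)) • Y (Function.update q i a)) :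
    ∑ q : Fin C → Q, (∏ i, w (q i)) • ((Y q + ∑ i, D i (q i)) * (Y q + ∑ i, D i (q i)))
     = ∑ q : Fin C → Q, (∏ i, w (q i)) • (Y q * Y q) - ∑ i, ∑ a, w a • (D i a * D i a) := by
  set Yb := ∑ q : Fin C → Q, (∏ i, w (q i)) • Y q with hYb
  have hD0 : ∀ i, ∑ a, w a • D i a = 0 := by
    intro i
    simp only [hD, smul_sub, Finset.sum_sub_distrib]
    rw [resample w hw1 i Y, ← Finset.sum_smul, hw1, one_smul, sub_self]
  have marg : ∀ i (G : Q → M), ∑ q : Fin C → Q, (∏ j, w (q j)) • G (q i) = ∑ a, w a • G a := by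
    intro i G
    rw [← resample w hw1 i]
    simp only [Function.update_self, ← Finset.sum_smul, sum_weights w hw1, one_smul]
  have hYi : ∀ i a, ∑ q : Fin C → Q, (∏ j, w (q j)) • Y (Function.update q i a) = Yb - D i a := by
    intro i a
    rw [hD]; abel
  have h1 : ∀ i, ∑ q : Fin C → Q, (∏ j, w (q j)) • (Y q * D i (q i))
      = - ∑ a, w a • (D i a * D i a) := by
    intro i
    rw [← resample w hw1 i]
    simp only [Function.update_self, ← smul_mul_assoc, ← Finset.sum_mul, hYi]
    simp only [smul_mul_assoc, sub_mul, smul_sub, Finset.sum_sub_distrib]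
    simp only [← mul_smul_comm, ← Finset.mul_sum, hD0, mul_zero, zero_sub]
  have h2 : ∀ i, ∑ q : Fin C → Q, (∏ j, w (q j)) • (D i (q i) * Y q)
      = - ∑ a, w a • (D i a * D i a) := by
    intro i
    rw [← resample w hw1 i]
    simp only [Function.update_self, ← mul_smul_comm, ← Finset.mul_sum, hYi]
    simp only [mul_smul_comm, mul_sub, smul_sub, Finset.sum_sub_distrib]
    simp only [← smul_mul_assoc, ← Finset.sum_mul, hD0, zero_mul, zero_sub]
  have h3 : ∀ i k, ∑ q : Fin C → Q, (∏ j, w (q j)) • (D i (q i) * D k (q k))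
      = if i = k then ∑ a, w a • (D i a * D i a) else 0 := by
    intro i k
    split_ifs with h
    · subst h
      exact marg i (fun a => D i a * D i a)
    · rw [← resample w hw1 i]
      simp only [Function.update_self, Function.update_of_ne (Ne.symm h)]
      simp only [← mul_smul_comm, ← Finset.mul_sum, marg k (D k), hD0, mul_zero, smul_zero,
        Finset.sum_const_zero]
  simp only [add_mul, mul_add, smul_add, Finset.sum_add_distrib, Finset.mul_sum, Finset.sum_mul,
    Finset.smul_sum]
  have e1 : ∑ q : Fin C → Q, ∑ i, (∏ j, w (q j)) • (Y q * D i (q i))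
      = - ∑ i, ∑ a, w a • (D i a * D i a) := by
    rw [Finset.sum_comm]; simp only [h1, Finset.sum_neg_distrib]
  have e2 : ∑ q : Fin C → Q, ∑ i, (∏ j, w (q j)) • (D i (q i) * Y q)
      = - ∑ i, ∑ a, w a • (D i a * D i a) := by
    rw [Finset.sum_comm]; simp only [h2, Finset.sum_neg_distrib]
  have e3 : ∑ q : Fin C → Q, ∑ i, ∑ k, (∏ j, w (q j)) • (D k (q k) * D i (q i))
      = ∑ i, ∑ a, w a • (D i a * D i a) := by
    rw [Finset.sum_comm]
    refine Finset.sum_congr rfl fun i _ => ?_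
    rw [Finset.sum_comm]
    simp [h3]
  rw [e1, e2, e3]
  abel

end Helpers

/-- Claim A.4: for matrices `0 ≤ Y_q ≤ I`, with `Y` the mean over `μ^C` and `Y_{i,q_i}`
the mean conditioned on coordinate `i` equaling `q_i`,
`E_{(i,q_i)}[(Y − Y_{i,q_i})²] ≤ (1/C)·E_q[Y_q²]` in the Loewner order. -/
theorem claimA4 {Q : Type*} [Fintype Q] [Nonempty Q] [DecidableEq Q]
    (w : Q → ℝ) (hw : ∀ q, 0 ≤ w q) (hw1 : ∑ q, w q = 1)
    (C n : ℕ) (hC : 0 < C) (hn : 0 < n)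
    (Y : (Fin C → Q) → Matrix (Fin n) (Fin n) ℂ)
    (hY0 : ∀ q, (Y q).PosSemidef) (hY1 : ∀ q, (1 - Y q).PosSemidef) :
    let Yb := ∑ q : Fin C → Q, (∏ i, w (q i)) • Y q
    let Yi := fun (i : Fin C) (qi : Q) =>
      ∑ q : Fin C → Q, (∏ j, w (q j)) • Y (Function.update q i qi)
    ((C : ℝ)⁻¹ • (∑ q : Fin C → Q, (∏ i, w (q i)) • (Y q * Y q))
      - (C : ℝ)⁻¹ • ∑ i : Fin C, ∑ qi : Q,
          w qi • ((Yb - Yi i qi) * (Yb - Yi i qi))).PosSemidef := by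
  intro Yb Yi
  have hYH : ∀ q, (Y q)ᴴ = Y q := fun q => (hY0 q).isHermitian
  have hsum : ∀ F : (Fin C → Q) → Matrix (Fin n) (Fin n) ℂ, (∀ q, (F q)ᴴ = F q) →
      (∑ q : Fin C → Q, (∏ i, w (q i)) • F q)ᴴ = ∑ q : Fin C → Q, (∏ i, w (q i)) • F q := by
    intro F hF
    rw [Matrix.conjTranspose_sum]
    refine Finset.sum_congr rfl fun q _ => ?_
    rw [Matrix.conjTranspose_smul, hF, star_trivial]
  have hDH : ∀ i a, (Yb - Yi i a)ᴴ = Yb - Yi i a := by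
    intro i a
    rw [Matrix.conjTranspose_sub, hsum _ hYH, hsum _ (fun q => hYH _)]
  rw [← smul_sub, ← key w hw1 Y (fun i a => Yb - Yi i a) (fun i a => rfl)]
  refine Matrix.PosSemidef.smul ?_ (by positivity : (0 : ℝ) ≤ (C : ℝ)⁻¹)
  refine Matrix.posSemidef_sum _ fun q _ => ?_
  refine Matrix.PosSemidef.smul ?_ (Finset.prod_nonneg fun i _ => hw _)
  have hZ : (Y q + ∑ i, (Yb - Yi i (q i)))ᴴ = Y q + ∑ i, (Yb - Yi i (q i)) := by
    rw [Matrix.conjTranspose_add, hYH, Matrix.conjTranspose_sum]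
    simp only [hDH]
  have := Matrix.posSemidef_conjTranspose_mul_self (Y q + ∑ i, (Yb - Yi i (q i)))
  rwa [hZ] at this
end
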